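/- arXiv:2103.02865 — 3 statements merged into one kernel-verified Lean document; each statement's English description precedes it below -/
import Mathlib

section
/- Fix n ≥ 1 and let f : Sⁿ → ℝ be a continuous nonnegative antipodally symmetric function. Then ∫_{Sⁿ} fⁿ dσ ≥ (σ(Sⁿ)/πⁿ)·L(f)ⁿ; equivalently, the volume (1/2)∫_{Sⁿ} fⁿ dσ of real projective n-space ℝPⁿ with the conformal metric f²·g₀ is at least (σ(Sⁿ)/(2πⁿ)) times the n-th power of its systole L(f), which is the systolic ratio of the round metric on ℝPⁿ. (Generalized Pu inequality for ℝPⁿ.) -/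
open MeasureTheory Set

noncomputable section

/-- A function `γ : ℝ → ℝ^{n+1}` is piecewise `C¹` on `[0,1]`: there is a partition
`0 = u₀ ≤ u₁ ≤ ⋯ ≤ u_k = 1` such that `γ` is `C¹` on each subinterval. -/
def IsPiecewiseC1 (n : ℕ) (γ : ℝ → EuclideanSpace ℝ (Fin (n + 1))) : Prop :=
  ∃ (k : ℕ) (u : Fin (k + 1) → ℝ), u 0 = 0 ∧ u (Fin.last k) = 1 ∧ Monotone u ∧
    ∀ i : Fin k, ContDiffOn ℝ 1 γ (Set.Icc (u i.castSucc) (u i.succ))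

/-- A piecewise `C¹` path on `[0,1]` lying on the unit sphere `Sⁿ ⊆ ℝ^{n+1}`. -/
def IsSpherePath (n : ℕ) (γ : ℝ → EuclideanSpace ℝ (Fin (n + 1))) : Prop :=
  IsPiecewiseC1 n γ ∧
    ∀ t ∈ Set.Icc (0 : ℝ) 1, γ t ∈ Metric.sphere (0 : EuclideanSpace ℝ (Fin (n + 1))) 1

/-- The `f`-length of a path `γ` on the sphere: `∫₀¹ f(γ(t)) ‖γ'(t)‖ dt`. -/
def fLength (n : ℕ) (f : EuclideanSpace ℝ (Fin (n + 1)) → ℝ)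
    (γ : ℝ → EuclideanSpace ℝ (Fin (n + 1))) : ℝ :=
  ∫ t in Set.Icc (0 : ℝ) 1, f (γ t) * ‖deriv γ t‖

/-- The systole `L(f)`: the infimum of `f`-lengths of piecewise `C¹` paths on the sphere
joining a pair of antipodal points. -/
def systole (n : ℕ) (f : EuclideanSpace ℝ (Fin (n + 1)) → ℝ) : ℝ :=
  sInf { l | ∃ γ : ℝ → EuclideanSpace ℝ (Fin (n + 1)),
    IsSpherePath n γ ∧ γ 1 = -γ 0 ∧ l = fLength n f γ }

/-!
Every rotated half great circle `g ∘ c` joins two antipodal points of the sphere at constant speed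
`π`, so `L(f) / π ≤ ∫₀¹ f (g (c t)) dt` for every orthogonal `g`. The orthogonal group is compact
and acts transitively on the sphere preserving `σ`, so averaging over it by Haar measure turns the
right-hand side into the mean of `f` over the sphere. Jensen's inequality for `y ↦ yⁿ` then bounds
`(L(f) / π)ⁿ` by the mean of `fⁿ`. That `σ(Sⁿ)` is finite follows from covering the sphere by images
of compact balls under inverse stereographic projections, which are smooth.
-/

section Averaging

open scoped BoundedContinuousFunction

theorem measureReal_mul_pow_le_integral_pow {X : Type*} [MeasurableSpace X] {μ : Measure X}
    [IsFiniteMeasure μ] {f : X → ℝ} {a : ℝ} (n : ℕ) (ha : 0 ≤ a) (hf : 0 ≤ᵐ[μ] f)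
    (hfi : Integrable f μ) (hfn : Integrable (fun x ↦ f x ^ n) μ)
    (h : μ.real univ * a ≤ ∫ x, f x ∂μ) :
    μ.real univ * a ^ n ≤ ∫ x, f x ^ n ∂μ := by
  rcases eq_zero_or_neZero μ with rfl | _
  · simp
  have ha_le : a ≤ ⨍ x, f x ∂μ := by
    rw [← measure_smul_average, smul_eq_mul] at h
    exact le_of_mul_le_mul_left h measureReal_univ_pos
  calc μ.real univ * a ^ n ≤ μ.real univ * (⨍ x, f x ∂μ) ^ n := by gcongr
    _ ≤ μ.real univ * ⨍ x, f x ^ n ∂μ := by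
        gcongr
        exact (convexOn_pow n).map_average_le (continuous_pow n).continuousOn isClosed_Ici
          hf hfi hfn
    _ = ∫ x, f x ^ n ∂μ := measure_smul_average μ _

variable {G X T : Type*} [TopologicalSpace G] [TopologicalSpace X] [SecondCountableTopology X]
  [MeasurableSpace X] [OpensMeasurableSpace X] [MeasurableSpace T]

theorem integrable_prod_smul [SMul G X] [ContinuousSMul G X] [MeasurableSpace G]
    [OpensMeasurableSpace G] (m : Measure G) [IsFiniteMeasure m] (ν : Measure T) [IsFiniteMeasure ν]
    (F : X →ᵇ ℝ) {c : T → X} (hc : Measurable c) :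
    Integrable (fun p : G × T ↦ F (p.1 • c p.2)) (m.prod ν) := by
  have hsmul : Measurable fun p : G × X ↦ F (p.1 • p.2) :=
    (F.continuous.comp continuous_smul).measurable
  have hmeas : Measurable fun p : G × T ↦ F (p.1 • c p.2) :=
    hsmul.comp (measurable_fst.prodMk (hc.comp measurable_snd))
  exact .of_bound hmeas.aestronglyMeasurable ‖F‖ (.of_forall fun _ ↦ F.norm_coe_le_norm _)

theorem measureReal_mul_integral_smul [Group G] [MulAction G X] [ContinuousSMul G X]
    [MulAction.IsPretransitive G X] [MeasurableSpace G] [OpensMeasurableSpace G] [MeasurableMul G]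
    (m : Measure G) [IsProbabilityMeasure m] [m.IsMulRightInvariant] (μ : Measure X)
    [IsFiniteMeasure μ] [MeasurableConstSMul G X] [SMulInvariantMeasure G X μ] (F : X →ᵇ ℝ)
    (x : X) :
    μ.real univ * ∫ g : G, F (g • x) ∂m = ∫ y, F y ∂μ := by
  have orbit_average_eq (y : X) : ∫ g : G, F (g • y) ∂m = ∫ g : G, F (g • x) ∂m := by
    obtain ⟨h, rfl⟩ := MulAction.exists_smul_eq G x y
    simpa only [mul_smul] using integral_mul_right_eq_self (fun g : G ↦ F (g • x)) h
  calc μ.real univ * ∫ g : G, F (g • x) ∂m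
      = ∫ y, ∫ g : G, F (g • y) ∂m ∂μ := by simp [orbit_average_eq]
    _ = ∫ g : G, ∫ y, F (g • y) ∂μ ∂m :=
        (integral_integral_swap (integrable_prod_smul m μ F measurable_id)).symm
    _ = ∫ y, F y ∂μ := by simp [integral_smul_eq_self]

theorem exists_measureReal_mul_integral_smul_le (G : Type*) [Group G] [TopologicalSpace G]
    [IsTopologicalGroup G] [CompactSpace G] [MulAction G X] [ContinuousSMul G X]
    [MulAction.IsPretransitive G X] [MeasurableConstSMul G X] (μ : Measure X) [IsFiniteMeasure μ]
    [SMulInvariantMeasure G X μ] (ν : Measure T) [IsProbabilityMeasure ν] (F : X →ᵇ ℝ)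
    {c : T → X} (hc : Measurable c) :
    ∃ g : G, μ.real univ * ∫ t, F (g • c t) ∂ν ≤ ∫ x, F x ∂μ := by
  borelize G
  obtain ⟨m, _, _⟩ : ∃ m : Measure G, IsProbabilityMeasure m ∧ m.IsMulRightInvariant := by
    refine ⟨(Measure.haarMeasure ⊤).inv, ⟨?_⟩, inferInstance⟩
    simpa using Measure.haarMeasure_self (K₀ := (⊤ : TopologicalSpace.PositiveCompacts G))
  have hint := integrable_prod_smul m ν F hc
  obtain ⟨g, hg⟩ := exists_le_integral hint.integral_prod_left
  refine ⟨g, ?_⟩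
  calc μ.real univ * ∫ t, F (g • c t) ∂ν
      ≤ μ.real univ * ∫ g : G, ∫ t, F (g • c t) ∂ν ∂m := by gcongr
    _ = ∫ t, μ.real univ * ∫ g : G, F (g • c t) ∂m ∂ν := by
        rw [integral_integral_swap hint, integral_const_mul]
    _ = ∫ x, F x ∂μ := by simp [measureReal_mul_integral_smul]

end Averaging

section OrthogonalGroup

open Metric

instance compactSpace_unitary {𝕜 E : Type*} [RCLike 𝕜] [NormedAddCommGroup E]
    [InnerProductSpace 𝕜 E] [FiniteDimensional 𝕜 E] [CompleteSpace E] :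
    CompactSpace (unitary (E →L[𝕜] E)) := by
  have : ProperSpace (E →L[𝕜] E) := FiniteDimensional.proper 𝕜 _
  refine isCompact_iff_compactSpace.1 (isCompact_of_isClosed_isBounded isClosed_unitary
    (isBounded_iff_forall_norm_le.2 ⟨1, fun g hg ↦ ?_⟩))
  exact (Unitary.linearIsometryEquiv ⟨g, hg⟩).toLinearIsometry.norm_toContinuousLinearMap_le

variable {E : Type*} [NormedAddCommGroup E] [InnerProductSpace ℝ E] [CompleteSpace E] {r : ℝ}

/-- The action of the orthogonal group on the sphere of radius `r`. -/
instance unitaryMulActionSphere : MulAction (unitary (E →L[ℝ] E)) (sphere (0 : E) r) where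
  smul g x := ⟨(g : E →L[ℝ] E) x, mem_sphere_zero_iff_norm.2 <|
    ((Unitary.linearIsometryEquiv g).norm_map x).trans (norm_eq_of_mem_sphere x)⟩
  one_smul _ := rfl
  mul_smul _ _ _ := rfl

@[simp]
theorem coe_unitary_smul (g : unitary (E →L[ℝ] E)) (x : sphere (0 : E) r) :
    ((g • x : sphere (0 : E) r) : E) = Unitary.linearIsometryEquiv g x :=
  rfl

instance continuousSMul_unitary_sphere :
    ContinuousSMul (unitary (E →L[ℝ] E)) (sphere (0 : E) r) where
  continuous_smul := by
    refine Continuous.subtype_mk (f := fun p : unitary (E →L[ℝ] E) × sphere (0 : E) r ↦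
      (p.1 : E →L[ℝ] E) p.2) ?_ _
    fun_prop

instance isIsometricSMul_unitary_sphere :
    IsIsometricSMul (unitary (E →L[ℝ] E)) (sphere (0 : E) r) where
  isometry_smul g :=
    .of_dist_eq fun x y ↦ (Unitary.linearIsometryEquiv g).dist_map (x : E) y

instance isPretransitive_unitary_sphere :
    MulAction.IsPretransitive (unitary (E →L[ℝ] E)) (sphere (0 : E) r) where
  exists_smul_eq x y := by
    refine ⟨Unitary.linearIsometryEquiv.symm (ℝ ∙ (x - y : E))ᗮ.reflection, Subtype.ext ?_⟩
    simpa using Submodule.reflection_sub (v := (x : E)) (w := y) (by simp)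

end OrthogonalGroup

section HausdorffMeasure

open Metric Module

theorem hausdorffMeasure_image_lt_top_of_contDiff {V W : Type*} [NormedAddCommGroup V]
    [NormedSpace ℝ V] [FiniteDimensional ℝ V] [NormedAddCommGroup W] [NormedSpace ℝ W]
    [MeasurableSpace W] [BorelSpace W] {φ : V → W} (hφ : ContDiff ℝ 1 φ) {K : Set V}
    (hK : IsCompact K) :
    μH[(finrank ℝ V : ℝ)] (φ '' K) < ⊤ := by
  borelize V
  obtain ⟨C, hC⟩ := hφ.locallyLipschitz.locallyLipschitzOn.exists_lipschitzOnWith_of_compact hK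
  refine (hC.hausdorffMeasure_image_le (Nat.cast_nonneg _)).trans_lt ?_
  exact ENNReal.mul_lt_top (by simp) hK.measure_lt_top

theorem setIntegral_hausdorffMeasure_eq_integral_subtype {X : Type*} [MetricSpace X]
    [MeasurableSpace X] [BorelSpace X] {F : Type*} [NormedAddCommGroup F] [NormedSpace ℝ F]
    {s : Set X} (hs : MeasurableSet s) {d : ℝ} (hd : 0 ≤ d) (f : X → F) :
    ∫ x in s, f x ∂μH[d] = ∫ x : s, f x ∂μH[d] := by
  have hval : Isometry (Subtype.val : s → X) := isometry_subtype_coe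
  rw [← (MeasurableEmbedding.subtype_coe hs).integral_map, hval.map_hausdorffMeasure (.inl hd),
    Subtype.range_coe]

theorem isFiniteMeasure_hausdorffMeasure_sphere {E : Type*} [NormedAddCommGroup E]
    [InnerProductSpace ℝ E] [MeasurableSpace E] [BorelSpace E] {n : ℕ}
    (hE : finrank ℝ E = n + 1) :
    IsFiniteMeasure (μH[(n : ℝ)] : Measure (sphere (0 : E) 1)) := by
  have : Fact (finrank ℝ E = n + 1) := ⟨hE⟩
  have : FiniteDimensional ℝ E := .of_fact_finrank_eq_succ n
  have : IsLocallyFiniteMeasure (μH[(n : ℝ)] : Measure (sphere (0 : E) 1)) := by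
    refine ⟨fun x ↦ ?_⟩
    have hx : ‖-(x : E)‖ = 1 := by simp
    let ψ := (stereographic hx).symm
    refine ⟨ψ '' closedBall 0 1, ?_, ?_⟩
    · have hψ0 : ψ 0 = x := Subtype.ext <| (stereoInvFun_apply hx 0).trans (by simp)
      have hmem : ψ '' closedBall 0 1 ∈ nhds (ψ 0) :=
        (isOpenEmbedding_stereographic_symm hx).isOpenMap.image_mem_nhds
          (closedBall_mem_nhds 0 one_pos)
      rwa [hψ0] at hmem
    · have hψ : ContDiff ℝ 1 fun w ↦ (ψ w : E) :=
        contDiff_stereoInvFunAux.comp (ℝ ∙ (-(x : E)))ᗮ.subtypeL.contDiff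
      have hdim : finrank ℝ (ℝ ∙ (-(x : E)))ᗮ = n :=
        Submodule.finrank_orthogonal_span_singleton (ne_zero_of_norm_ne_zero (by simp [hx]))
      rw [← isometry_subtype_coe.hausdorffMeasure_image (.inl n.cast_nonneg), image_image, ← hdim]
      exact hausdorffMeasure_image_lt_top_of_contDiff hψ (isCompact_closedBall 0 1)
  infer_instance

end HausdorffMeasure

section GreatSemicircle

open Metric Module

variable {E : Type*} [NormedAddCommGroup E] [InnerProductSpace ℝ E] {e : Fin 2 → E}

/-- The half great circle `t ↦ cos (π t) e₀ + sin (π t) e₁`, joining `e₀` to `-e₀` as `t` runs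
from `0` to `1`; it lies on the unit sphere when the pair `e` is orthonormal. -/
def greatSemicircle (e : Fin 2 → E) (t : ℝ) : E :=
  Real.cos (Real.pi * t) • e 0 + Real.sin (Real.pi * t) • e 1

theorem norm_smul_add_smul_sq_of_orthonormal (he : Orthonormal ℝ e) (a b : ℝ) :
    ‖a • e 0 + b • e 1‖ ^ 2 = a ^ 2 + b ^ 2 := by
  have h01 : inner ℝ (e 0) (e 1) = 0 := he.2 (by decide)
  rw [norm_add_sq_real]
  simp [norm_smul, he.1, real_inner_smul_left, real_inner_smul_right, h01]

theorem norm_greatSemicircle (he : Orthonormal ℝ e) (t : ℝ) : ‖greatSemicircle e t‖ = 1 := by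
  have h := norm_smul_add_smul_sq_of_orthonormal he (Real.cos (Real.pi * t))
    (Real.sin (Real.pi * t))
  rw [Real.cos_sq_add_sin_sq] at h
  exact (pow_eq_one_iff_of_nonneg (norm_nonneg _) two_ne_zero).1 h

theorem contDiff_greatSemicircle (e : Fin 2 → E) : ContDiff ℝ 1 (greatSemicircle e) := by
  unfold greatSemicircle
  fun_prop

theorem greatSemicircle_one_eq_neg (e : Fin 2 → E) :
    greatSemicircle e 1 = -greatSemicircle e 0 := by
  simp [greatSemicircle]

theorem norm_deriv_greatSemicircle (he : Orthonormal ℝ e) (t : ℝ) :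
    ‖deriv (greatSemicircle e) t‖ = Real.pi := by
  have hπt : HasDerivAt (fun t : ℝ ↦ Real.pi * t) Real.pi t := by
    simpa using (hasDerivAt_id t).const_mul Real.pi
  have hderiv : HasDerivAt (greatSemicircle e)
      ((-Real.sin (Real.pi * t) * Real.pi) • e 0 + (Real.cos (Real.pi * t) * Real.pi) • e 1) t :=
    (hπt.cos.smul_const _).add (hπt.sin.smul_const _)
  rw [hderiv.deriv, ← sq_eq_sq₀ (norm_nonneg _) Real.pi_pos.le,
    norm_smul_add_smul_sq_of_orthonormal he]
  linear_combination Real.pi ^ 2 * Real.sin_sq_add_cos_sq (Real.pi * t)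

theorem exists_measureReal_mul_integral_greatSemicircle_le [FiniteDimensional ℝ E]
    [MeasurableSpace E] [BorelSpace E] (hE : 2 ≤ finrank ℝ E) {f : E → ℝ}
    (hf : ContinuousOn f (sphere 0 1)) (μ : Measure (sphere (0 : E) 1)) [IsFiniteMeasure μ]
    [SMulInvariantMeasure (unitary (E →L[ℝ] E)) (sphere (0 : E) 1) μ] :
    ∃ e : Fin 2 → E, Orthonormal ℝ e ∧
      μ.real univ * ∫ t in Icc (0 : ℝ) 1, f (greatSemicircle e t) ≤
        ∫ x : sphere (0 : E) 1, f x ∂μ := by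
  obtain ⟨e₀, he₀⟩ : ∃ e₀ : Fin 2 → E, Orthonormal ℝ e₀ :=
    ⟨_, (stdOrthonormalBasis ℝ E).orthonormal.comp _ (Fin.castLE_injective hE)⟩
  have : IsProbabilityMeasure (volume.restrict (Icc (0 : ℝ) 1)) := ⟨by simp⟩
  let c (t : ℝ) : sphere (0 : E) 1 :=
    ⟨greatSemicircle e₀ t, mem_sphere_zero_iff_norm.2 (norm_greatSemicircle he₀ t)⟩
  have hc : Measurable c := ((contDiff_greatSemicircle e₀).continuous.subtype_mk _).measurable
  obtain ⟨g, hg⟩ := exists_measureReal_mul_integral_smul_le (unitary (E →L[ℝ] E)) μ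
    (volume.restrict (Icc (0 : ℝ) 1)) (.mkOfCompact ⟨_, hf.domRestrict⟩) hc
  refine ⟨_, he₀.comp_linearIsometryEquiv (Unitary.linearIsometryEquiv g), ?_⟩
  simpa [c, greatSemicircle] using hg

end GreatSemicircle

section Systole

open Metric

variable {n : ℕ} {f : EuclideanSpace ℝ (Fin (n + 1)) → ℝ}

theorem fLength_nonneg
    (hpos : ∀ x ∈ sphere (0 : EuclideanSpace ℝ (Fin (n + 1))) 1, 0 ≤ f x)
    {γ : ℝ → EuclideanSpace ℝ (Fin (n + 1))} (hγ : IsSpherePath n γ) :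
    0 ≤ fLength n f γ :=
  setIntegral_nonneg measurableSet_Icc fun t ht ↦
    mul_nonneg (hpos _ (hγ.2 t ht)) (norm_nonneg _)

theorem systole_nonneg
    (hpos : ∀ x ∈ sphere (0 : EuclideanSpace ℝ (Fin (n + 1))) 1, 0 ≤ f x) :
    0 ≤ systole n f := by
  refine Real.sInf_nonneg ?_
  rintro _ ⟨γ, hγ, -, rfl⟩
  exact fLength_nonneg hpos hγ

theorem systole_le_fLength
    (hpos : ∀ x ∈ sphere (0 : EuclideanSpace ℝ (Fin (n + 1))) 1, 0 ≤ f x)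
    {γ : ℝ → EuclideanSpace ℝ (Fin (n + 1))} (hγ : IsSpherePath n γ) (hanti : γ 1 = -γ 0) :
    systole n f ≤ fLength n f γ := by
  refine csInf_le ⟨0, ?_⟩ ⟨γ, hγ, hanti, rfl⟩
  rintro _ ⟨γ', hγ', -, rfl⟩
  exact fLength_nonneg hpos hγ'

theorem isPiecewiseC1_of_contDiff {γ : ℝ → EuclideanSpace ℝ (Fin (n + 1))}
    (hγ : ContDiff ℝ 1 γ) : IsPiecewiseC1 n γ :=
  ⟨1, fun i ↦ (i : ℝ), by simp, by simp, fun i j hij ↦ by simpa using hij,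
    fun _ ↦ hγ.contDiffOn⟩

variable {e : Fin 2 → EuclideanSpace ℝ (Fin (n + 1))}

theorem isSpherePath_greatSemicircle (he : Orthonormal ℝ e) :
    IsSpherePath n (greatSemicircle e) :=
  ⟨isPiecewiseC1_of_contDiff (contDiff_greatSemicircle e),
    fun t _ ↦ mem_sphere_zero_iff_norm.2 (norm_greatSemicircle he t)⟩

theorem fLength_greatSemicircle (he : Orthonormal ℝ e) :
    fLength n f (greatSemicircle e) =
      (∫ t in Icc (0 : ℝ) 1, f (greatSemicircle e t)) * Real.pi := by
  simp only [fLength, norm_deriv_greatSemicircle he, integral_mul_const]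

theorem measureReal_mul_systole_div_pi_le_integral (hn : 1 ≤ n)
    (hcont : ContinuousOn f (sphere (0 : EuclideanSpace ℝ (Fin (n + 1))) 1))
    (hpos : ∀ x ∈ sphere (0 : EuclideanSpace ℝ (Fin (n + 1))) 1, 0 ≤ f x)
    (μ : Measure (sphere (0 : EuclideanSpace ℝ (Fin (n + 1))) 1)) [IsFiniteMeasure μ]
    [SMulInvariantMeasure (unitary (EuclideanSpace ℝ (Fin (n + 1)) →L[ℝ]
      EuclideanSpace ℝ (Fin (n + 1))))
      (sphere (0 : EuclideanSpace ℝ (Fin (n + 1))) 1) μ] :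
    μ.real univ * (systole n f / Real.pi) ≤
      ∫ x : sphere (0 : EuclideanSpace ℝ (Fin (n + 1))) 1, f x ∂μ := by
  obtain ⟨e, he, hle⟩ :=
    exists_measureReal_mul_integral_greatSemicircle_le (by simpa using hn) hcont μ
  have hsys : systole n f / Real.pi ≤ ∫ t in Icc (0 : ℝ) 1, f (greatSemicircle e t) := by
    rw [div_le_iff₀ Real.pi_pos, ← fLength_greatSemicircle he]
    exact systole_le_fLength hpos (isSpherePath_greatSemicircle he) (greatSemicircle_one_eq_neg e)
  exact (mul_le_mul_of_nonneg_left hsys measureReal_nonneg).trans hle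

end Systole

theorem generalized_pu_inequality_general (n : ℕ) (hn : 1 ≤ n)
    (f : EuclideanSpace ℝ (Fin (n + 1)) → ℝ)
    (hcont : ContinuousOn f (Metric.sphere (0 : EuclideanSpace ℝ (Fin (n + 1))) 1))
    (hpos : ∀ x ∈ Metric.sphere (0 : EuclideanSpace ℝ (Fin (n + 1))) 1, 0 ≤ f x) :
    (μH[(n : ℝ)] (Metric.sphere (0 : EuclideanSpace ℝ (Fin (n + 1))) 1)).toReal /
        Real.pi ^ n * systole n f ^ n ≤
      ∫ x in Metric.sphere (0 : EuclideanSpace ℝ (Fin (n + 1))) 1, f x ^ n ∂μH[(n : ℝ)] := by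
  have := isFiniteMeasure_hausdorffMeasure_sphere (finrank_euclideanSpace_fin (𝕜 := ℝ) (n := n + 1))
  set S := Metric.sphere (0 : EuclideanSpace ℝ (Fin (n + 1))) 1
  have hS : MeasurableSet S := Metric.isClosed_sphere.measurableSet
  have hvol : (μH[(n : ℝ)] S).toReal = (μH[(n : ℝ)] : Measure S).real univ := by
    simpa [Measure.real] using
      setIntegral_hausdorffMeasure_eq_integral_subtype hS n.cast_nonneg fun _ ↦ (1 : ℝ)
  have hf : Continuous fun x : S ↦ f x := hcont.domRestrict
  have hint (k : ℕ) : Integrable (fun x : S ↦ f x ^ k) μH[(n : ℝ)] :=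
    (hf.pow k).integrable_of_hasCompactSupport (.of_compactSpace _)
  rw [setIntegral_hausdorffMeasure_eq_integral_subtype hS n.cast_nonneg, hvol, div_mul_eq_mul_div,
    mul_div_assoc, ← div_pow]
  exact measureReal_mul_pow_le_integral_pow n (div_nonneg (systole_nonneg hpos) Real.pi_pos.le)
    (.of_forall fun x : S ↦ hpos x x.2) (by simpa using hint 1) (hint n)
    (measureReal_mul_systole_div_pi_le_integral hn hcont hpos μH[(n : ℝ)])

/-- **Generalized Pu inequality for `ℝPⁿ`.**  For every `n ≥ 1` and every continuous
nonnegative antipodally symmetric `f : Sⁿ → ℝ` one has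
`∫_{Sⁿ} fⁿ dσ ≥ (σ(Sⁿ)/πⁿ)·L(f)ⁿ`, where `σ` is the `n`-dimensional surface
(Hausdorff) measure on the unit sphere `Sⁿ ⊆ ℝ^{n+1}`. -/
theorem generalized_pu_inequality (n : ℕ) (hn : 1 ≤ n)
    (f : EuclideanSpace ℝ (Fin (n + 1)) → ℝ)
    (hcont : ContinuousOn f (Metric.sphere (0 : EuclideanSpace ℝ (Fin (n + 1))) 1))
    (hpos : ∀ x ∈ Metric.sphere (0 : EuclideanSpace ℝ (Fin (n + 1))) 1, 0 ≤ f x)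
    (hsym : ∀ x ∈ Metric.sphere (0 : EuclideanSpace ℝ (Fin (n + 1))) 1, f (-x) = f x) :
    (μH[(n : ℝ)] (Metric.sphere (0 : EuclideanSpace ℝ (Fin (n + 1))) 1)).toReal /
        Real.pi ^ n * systole n f ^ n ≤
      ∫ x in Metric.sphere (0 : EuclideanSpace ℝ (Fin (n + 1))) 1, f x ^ n ∂μH[(n : ℝ)] :=
  generalized_pu_inequality_general n hn f hcont hpos
end
end

section
/- Let γ : [0,1] → ℝ³ be a Lipschitz closed curve (γ(0) = γ(1)) such that the convex hull of the image of γ contains a closed Euclidean ball of radius r > 0. Then the length of γ (its total variation) satisfies length(γ) ≥ 2πr. (A closed space curve whose convex hull contains a ball of radius r has length at least the circumference 2πr; this is the inequality 2πr ≤ L used for the systolic geodesic on a convex surface with inradius r.) -/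
open Set

noncomputable section

/-!
A finite form of the Cauchy–Crofton argument. If the convex hull of a closed curve contains a ball
of radius `r`, the projection of the curve to a line in the direction of a unit vector `e` sweeps
an interval of length `2r` back and forth, so it has variation at least `4r`. Sum this over `m`
equally spaced directions in a plane. For every `v` the sum of the `|⟪e, v⟫|` is at most
`‖v‖ / sin (π / 2m)`, so the length is at least `4 r m sin (π / 2m)`, which tends to `2πr`.
-/

open Filter Topology
open scoped Real RealInnerProductSpace

section Variation

variable {α X : Type*} [LinearOrder α] [PseudoEMetricSpace X]

theorem two_mul_edist_le_eVariationOn_of_closed {f : α → X} {s : Set α} {a b x y : α}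
    (ha : IsLeast s a) (hb : IsGreatest s b) (hab : f a = f b) (hx : x ∈ s) (hy : y ∈ s) :
    2 * edist (f x) (f y) ≤ eVariationOn f s := by
  wlog hxy : x ≤ y generalizing x y
  · rw [edist_comm]
    exact this hy hx (le_of_not_ge hxy)
  have edist_le_inter_Icc {p q : α} (hp : p ∈ s) (hq : q ∈ s) (hpq : p ≤ q) :
      edist (f p) (f q) ≤ eVariationOn f (s ∩ Icc p q) :=
    eVariationOn.edist_le f ⟨hp, left_mem_Icc.2 hpq⟩ ⟨hq, right_mem_Icc.2 hpq⟩
  have return_path : edist (f x) (f y) ≤ edist (f a) (f x) + edist (f y) (f b) :=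
    calc edist (f x) (f y) ≤ edist (f x) (f a) + edist (f a) (f y) := edist_triangle _ _ _
      _ = edist (f a) (f x) + edist (f y) (f b) := by
        rw [edist_comm (f x), edist_comm (f y), hab]
  calc 2 * edist (f x) (f y)
      ≤ edist (f a) (f x) + edist (f y) (f b) + edist (f x) (f y) := by
        rw [two_mul]
        gcongr
    _ = edist (f a) (f x) + edist (f x) (f y) + edist (f y) (f b) := add_right_comm _ _ _
    _ ≤ eVariationOn f (s ∩ Icc a x) + eVariationOn f (s ∩ Icc x y)
          + eVariationOn f (s ∩ Icc y b) := by
        gcongr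
        exacts [edist_le_inter_Icc ha.1 hx (ha.2 hx), edist_le_inter_Icc hx hy hxy,
          edist_le_inter_Icc hy hb.1 (hb.2 hy)]
    _ = eVariationOn f (s ∩ Icc a b) := by
        rw [eVariationOn.Icc_add_Icc f (ha.2 hx) hxy hx,
          eVariationOn.Icc_add_Icc f (ha.2 hy) (hb.2 hy) hy]
    _ ≤ eVariationOn f s := eVariationOn.mono f inter_subset_left

theorem ofReal_two_mul_sub_le_eVariationOn_of_closed {f : α → ℝ} {s : Set α} {a b x y : α}
    (ha : IsLeast s a) (hb : IsGreatest s b) (hab : f a = f b) (hx : x ∈ s) (hy : y ∈ s) :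
    ENNReal.ofReal (2 * (f x - f y)) ≤ eVariationOn f s :=
  calc ENNReal.ofReal (2 * (f x - f y))
      ≤ ENNReal.ofReal (2 * dist (f x) (f y)) := by
        rw [Real.dist_eq]
        gcongr
        exact le_abs_self _
    _ = 2 * edist (f x) (f y) := by
        rw [ENNReal.ofReal_mul zero_le_two, ENNReal.ofReal_ofNat, edist_dist]
    _ ≤ eVariationOn f s := two_mul_edist_le_eVariationOn_of_closed ha hb hab hx hy

theorem exists_monotone_image_Iic_eq_coe_finset {t : Finset α} (ht : t.Nonempty) :
    ∃ (u : ℕ → α) (n : ℕ), Monotone u ∧ u '' Iic n = t := by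
  have card_pos := ht.card_pos
  refine ⟨fun i ↦ t.orderEmbOfFin rfl ⟨min i (t.card - 1), by omega⟩, t.card - 1,
    fun i j hij ↦ OrderEmbedding.monotone _ (Fin.mk_le_mk.2 (by omega)), ?_⟩
  rw [← t.range_orderEmbOfFin rfl]
  refine Subset.antisymm (image_subset_iff.2 fun i _ ↦ mem_range_self _) ?_
  rintro _ ⟨i, rfl⟩
  exact ⟨i, mem_Iic.2 (by omega), congrArg _ (Fin.ext (min_eq_left (by omega)))⟩

theorem sum_eVariationOn_coe_finset_le {ι Y : Type*} [PseudoEMetricSpace Y] {f : ι → α → X}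
    {g : α → Y} {I : Finset ι} (t : Finset α)
    (hfg : ∀ x y, ∑ k ∈ I, edist (f k x) (f k y) ≤ edist (g x) (g y)) :
    ∑ k ∈ I, eVariationOn (f k) t ≤ eVariationOn g t := by
  obtain rfl | ht := t.eq_empty_or_nonempty
  · simp
  obtain ⟨u, n, hu, hut⟩ := exists_monotone_image_Iic_eq_coe_finset ht
  simp only [← hut, eVariationOn.image_range_of_monotone _ hu]
  rw [Finset.sum_comm]
  exact Finset.sum_le_sum fun i _ ↦ hfg _ _

end Variation

section Width

variable {E : Type*} [NormedAddCommGroup E] [InnerProductSpace ℝ E]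

theorem exists_inner_add_mul_norm_le_inner {S : Set E} {c : E} {r : ℝ} (hr : 0 ≤ r)
    (hball : Metric.closedBall c r ⊆ convexHull ℝ S) (e : E) :
    ∃ x ∈ S, ⟪e, c⟫ + r * ‖e‖ ≤ ⟪e, x⟫ := by
  have extreme_mem : c + (r / ‖e‖) • e ∈ Metric.closedBall c r := by
    rw [mem_closedBall_iff_norm, add_sub_cancel_left, norm_smul, norm_div, norm_norm,
      Real.norm_of_nonneg hr, div_mul_eq_mul_div, mul_div_assoc]
    exact mul_le_of_le_one_right hr (div_self_le_one _)
  have inner_extreme : ⟪e, c + (r / ‖e‖) • e⟫ = ⟪e, c⟫ + r * ‖e‖ := by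
    rw [inner_add_right, inner_smul_right, real_inner_self_eq_norm_mul_norm, div_mul_eq_mul_div,
      mul_div_assoc, mul_self_div_self]
  rw [← inner_extreme]
  exact ((innerSL ℝ e).toLinearMap.convexOn convex_univ).exists_ge_of_mem_convexHull
    (subset_univ S) (hball extreme_mem)

theorem exists_mul_norm_le_inner_sub_inner {S : Set E} {c : E} {r : ℝ} (hr : 0 ≤ r)
    (hball : Metric.closedBall c r ⊆ convexHull ℝ S) (e : E) :
    ∃ x ∈ S, ∃ y ∈ S, 2 * r * ‖e‖ ≤ ⟪e, x⟫ - ⟪e, y⟫ := by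
  obtain ⟨x, hxS, hx⟩ := exists_inner_add_mul_norm_le_inner hr hball e
  obtain ⟨y, hyS, hy⟩ := exists_inner_add_mul_norm_le_inner hr hball (-e)
  rw [inner_neg_left, inner_neg_left, norm_neg] at hy
  exact ⟨x, hxS, y, hyS, by linarith⟩

theorem ofReal_four_mul_sum_norm_le_eVariationOn {α ι : Type*} [LinearOrder α] {γ : α → E}
    {s : Set α} {a b : α} (ha : IsLeast s a) (hb : IsGreatest s b) (hab : γ a = γ b) {c : E}
    {r : ℝ} (hr : 0 ≤ r) (hball : Metric.closedBall c r ⊆ convexHull ℝ (γ '' s))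
    {I : Finset ι} {e : ι → E} (he : ∀ v, ∑ k ∈ I, |⟪e k, v⟫| ≤ ‖v‖) :
    ENNReal.ofReal (4 * r * ∑ k ∈ I, ‖e k‖) ≤ eVariationOn γ s := by
  have width (k : ι) : ∃ x ∈ s, ∃ y ∈ s, 2 * r * ‖e k‖ ≤ ⟪e k, γ x⟫ - ⟪e k, γ y⟫ := by
    simpa only [exists_mem_image] using exists_mul_norm_le_inner_sub_inner hr hball (e k)
  choose x hxs y hys hxy using width
  let t : Finset α := {a, b} ∪ (I.image x ∪ I.image y)
  have hts : (t : Set α) ⊆ s := by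
    intro z hz
    simp only [t, Finset.mem_coe, Finset.mem_union, Finset.mem_insert, Finset.mem_singleton,
      Finset.mem_image] at hz
    obtain (rfl | rfl) | ⟨k, -, rfl⟩ | ⟨k, -, rfl⟩ := hz
    exacts [ha.1, hb.1, hxs k, hys k]
  have hat : IsLeast (t : Set α) a := ⟨by simp [t], fun z hz ↦ ha.2 (hts hz)⟩
  have hbt : IsGreatest (t : Set α) b := ⟨by simp [t], fun z hz ↦ hb.2 (hts hz)⟩
  have variation_inner {k : ι} (hk : k ∈ I) :
      ENNReal.ofReal (4 * r * ‖e k‖) ≤ eVariationOn (fun p ↦ ⟪e k, γ p⟫) t := by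
    have hxt : x k ∈ t := by grind
    have hyt : y k ∈ t := by grind
    exact (ENNReal.ofReal_le_ofReal (by linarith [hxy k])).trans
      (ofReal_two_mul_sub_le_eVariationOn_of_closed hat hbt (by simp only [hab]) hxt hyt)
  have sum_edist_inner_le (p q : α) :
      ∑ k ∈ I, edist ⟪e k, γ p⟫ ⟪e k, γ q⟫ ≤ edist (γ p) (γ q) := by
    simp only [edist_dist, dist_eq_norm, ← inner_sub_right, Real.norm_eq_abs]
    rw [← ENNReal.ofReal_sum_of_nonneg fun k _ ↦ abs_nonneg _]
    exact ENNReal.ofReal_le_ofReal (he _)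
  calc ENNReal.ofReal (4 * r * ∑ k ∈ I, ‖e k‖)
      = ∑ k ∈ I, ENNReal.ofReal (4 * r * ‖e k‖) := by
        rw [Finset.mul_sum, ENNReal.ofReal_sum_of_nonneg fun k _ ↦ by positivity]
    _ ≤ ∑ k ∈ I, eVariationOn (fun p ↦ ⟪e k, γ p⟫) t :=
        Finset.sum_le_sum fun k hk ↦ variation_inner hk
    _ ≤ eVariationOn γ t := sum_eVariationOn_coe_finset_le t sum_edist_inner_le
    _ ≤ eVariationOn γ s := eVariationOn.mono γ hts

end Width

section Trigonometry

theorem two_mul_sin_half_mul_sum_sin (x h : ℝ) (m : ℕ) :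
    2 * Real.sin (h / 2) * ∑ k ∈ Finset.range m, Real.sin (x + k * h) =
      Real.cos (x - h / 2) - Real.cos (x + m * h - h / 2) := by
  have telescope (k : ℕ) : 2 * Real.sin (h / 2) * Real.sin (x + k * h) =
      Real.cos (x + k * h - h / 2) - Real.cos (x + (k + 1 : ℕ) * h - h / 2) := by
    rw [show x + (k + 1 : ℕ) * h - h / 2 = x + k * h + h / 2 by push_cast; ring,
      Real.cos_sub, Real.cos_add _ (h / 2)]
    ring
  simp only [Finset.mul_sum, telescope]
  simpa using Finset.sum_range_sub' (fun k : ℕ ↦ Real.cos (x + k * h - h / 2)) m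

theorem periodic_sum_abs_sin_add_mul_pi_div {m : ℕ} (hm : m ≠ 0) :
    Function.Periodic (fun x ↦ ∑ k ∈ Finset.range m, |Real.sin (x + k * (π / m))|) (π / m) := by
  intro x
  have shift (k : ℕ) : x + π / m + k * (π / m) = x + (k + 1 : ℕ) * (π / m) := by
    push_cast
    ring
  have wrap : |Real.sin (x + m * (π / m))| = |Real.sin (x + (0 : ℕ) * (π / m))| := by
    rw [mul_div_cancel₀ π (by exact_mod_cast hm), Real.sin_add_pi, abs_neg]
    simp
  simp only [shift]
  have := (Finset.sum_range_succ' (fun k : ℕ ↦ |Real.sin (x + k * (π / m))|) m).symm.trans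
    (Finset.sum_range_succ _ m)
  linarith

theorem sin_pi_div_natCast_div_two_nonneg (m : ℕ) : 0 ≤ Real.sin (π / m / 2) := by
  refine Real.sin_nonneg_of_nonneg_of_le_pi (by positivity) ?_
  have : π / m ≤ π := div_nat_le_self_of_nonnneg Real.pi_nonneg m
  linarith [Real.pi_pos]

theorem sin_mul_sum_abs_sin_le_one (m : ℕ) (x : ℝ) :
    Real.sin (π / m / 2) * ∑ k ∈ Finset.range m, |Real.sin (x + k * (π / m))| ≤ 1 := by
  obtain rfl | hm := eq_or_ne m 0
  · simp
  have hm' : (0 : ℝ) < m := by positivity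
  obtain ⟨y, ⟨hy0, hym⟩, hxy⟩ :=
    (periodic_sum_abs_sin_add_mul_pi_div hm).exists_mem_Ico₀ (by positivity) x
  have abs_sin_eq : ∀ k ∈ Finset.range m,
      |Real.sin (y + k * (π / m))| = Real.sin (y + k * (π / m)) := by
    intro k hk
    have hkm : (k + 1 : ℝ) ≤ m := by exact_mod_cast Finset.mem_range.1 hk
    refine abs_of_nonneg (Real.sin_nonneg_of_nonneg_of_le_pi (by positivity) ?_)
    calc y + k * (π / m) ≤ (k + 1) * (π / m) := by linarith
      _ ≤ m * (π / m) := by gcongr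
      _ = π := mul_div_cancel₀ π hm'.ne'
  have sum_eq := two_mul_sin_half_mul_sum_sin y (π / m) m
  rw [mul_div_cancel₀ π hm'.ne', add_sub_right_comm, Real.cos_add_pi] at sum_eq
  rw [hxy, Finset.sum_congr rfl abs_sin_eq]
  linarith [Real.cos_le_one (y - π / m / 2)]

theorem sin_mul_sum_abs_cos_mul_add_sin_mul_le (m : ℕ) (p q : ℝ) :
    Real.sin (π / m / 2) *
      ∑ k ∈ Finset.range m, |Real.cos (k * (π / m)) * p + Real.sin (k * (π / m)) * q| ≤
        √(p ^ 2 + q ^ 2) := by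
  let z : ℂ := ⟨p, q⟩
  have polar (θ : ℝ) : Real.cos θ * p + Real.sin θ * q =
      ‖z‖ * Real.sin (π / 2 - z.arg + θ) :=
    calc Real.cos θ * p + Real.sin θ * q
        = Real.cos θ * (‖z‖ * Real.cos z.arg) + Real.sin θ * (‖z‖ * Real.sin z.arg) := by
          rw [Complex.norm_mul_cos_arg, Complex.norm_mul_sin_arg]
      _ = ‖z‖ * Real.cos (θ - z.arg) := by
          rw [Real.cos_sub]
          ring
      _ = ‖z‖ * Real.sin (π / 2 - z.arg + θ) := by
          rw [← Real.sin_add_pi_div_two]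
          ring_nf
  calc _ = ‖z‖ * (Real.sin (π / m / 2) *
        ∑ k ∈ Finset.range m, |Real.sin (π / 2 - z.arg + k * (π / m))|) := by
        simp only [polar, abs_mul, abs_norm, ← Finset.mul_sum]
        ring
    _ ≤ ‖z‖ := mul_le_of_le_one_right (norm_nonneg z) (sin_mul_sum_abs_sin_le_one m _)
    _ = √(p ^ 2 + q ^ 2) := Complex.norm_eq_sqrt_sq_add_sq z

theorem tendsto_natCast_mul_sin_div_atTop (x : ℝ) :
    Tendsto (fun m : ℕ ↦ m * Real.sin (x / m)) atTop (𝓝 x) := by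
  have eq_sinc : ∀ᶠ m : ℕ in atTop, x * Real.sinc (x / m) = m * Real.sin (x / m) := by
    filter_upwards [eventually_ne_atTop 0] with m hm
    obtain rfl | hx := eq_or_ne x 0
    · simp
    · rw [Real.sinc_of_ne_zero (by positivity)]
      field_simp
  refine Tendsto.congr' eq_sinc ?_
  simpa using ((Real.continuous_sinc.tendsto 0).comp
    (tendsto_const_div_atTop_nhds_zero_nat x)).const_mul x

end Trigonometry

section Plane

variable {E : Type*} [NormedAddCommGroup E] [InnerProductSpace ℝ E]

/-- The vector at angle `θ` in the plane spanned by `w 0` and `w 1`, the angle being measured from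
`w 0` towards `w 1`. It is a unit vector when `w` is orthonormal. -/
def planeDirection (w : Fin 2 → E) (θ : ℝ) : E :=
  Real.cos θ • w 0 + Real.sin θ • w 1

theorem norm_planeDirection {w : Fin 2 → E} (hw : Orthonormal ℝ w) (θ : ℝ) :
    ‖planeDirection w θ‖ = 1 := by
  rw [← sq_eq_sq₀ (norm_nonneg _) zero_le_one, planeDirection, norm_add_sq_real]
  simp [norm_smul, inner_smul_left, inner_smul_right, hw.1, hw.inner_eq_zero]

theorem sum_abs_inner_sin_smul_planeDirection_le {w : Fin 2 → E} (hw : Orthonormal ℝ w) (m : ℕ)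
    (v : E) : ∑ k ∈ Finset.range m,
      |⟪Real.sin (π / m / 2) • planeDirection w (k * (π / m)), v⟫| ≤ ‖v‖ := by
  have bessel : ⟪w 0, v⟫ ^ 2 + ⟪w 1, v⟫ ^ 2 ≤ ‖v‖ ^ 2 := by
    simpa using hw.sum_inner_products_le v (s := Finset.univ)
  simp only [planeDirection, inner_add_left, real_inner_smul_left, abs_mul,
    abs_of_nonneg (sin_pi_div_natCast_div_two_nonneg m), ← Finset.mul_sum]
  exact (sin_mul_sum_abs_cos_mul_add_sin_mul_le m _ _).trans
    (Real.sqrt_le_iff.2 ⟨norm_nonneg v, bessel⟩)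

theorem ofReal_four_mul_sin_le_eVariationOn {α : Type*} [LinearOrder α]
    {w : Fin 2 → E} (hw : Orthonormal ℝ w) {γ : α → E} {s : Set α} {a b : α}
    (ha : IsLeast s a) (hb : IsGreatest s b) (hab : γ a = γ b) {c : E} {r : ℝ} (hr : 0 ≤ r)
    (hball : Metric.closedBall c r ⊆ convexHull ℝ (γ '' s)) (m : ℕ) :
    ENNReal.ofReal (4 * r * (m * Real.sin (π / m / 2))) ≤ eVariationOn γ s := by
  simpa [norm_smul, norm_planeDirection hw, abs_of_nonneg (sin_pi_div_natCast_div_two_nonneg m)]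
    using ofReal_four_mul_sum_norm_le_eVariationOn ha hb hab hr hball
      (sum_abs_inner_sin_smul_planeDirection_le hw m)

theorem exists_orthonormal_fin_two (hE : 1 < Module.rank ℝ E) :
    ∃ w : Fin 2 → E, Orthonormal ℝ w := by
  have two_le_rank : ((2 : ℕ) : Cardinal) ≤ Module.rank ℝ E := by
    simpa [Cardinal.two_le_iff_one_lt] using hE
  obtain ⟨v, hv⟩ := Module.le_rank_iff.1 two_le_rank
  exact ⟨_, InnerProductSpace.gramSchmidtNormed_orthonormal hv⟩

end Plane

theorem length_ge_two_pi_r_of_ball_subset_convexHull_general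
    {α E : Type*} [LinearOrder α] [NormedAddCommGroup E] [InnerProductSpace ℝ E]
    (hE : 1 < Module.rank ℝ E) {γ : α → E} {s : Set α} {a b : α}
    (ha : IsLeast s a) (hb : IsGreatest s b) (hclosed : γ a = γ b)
    {r : ℝ} (hr : 0 ≤ r) {c : E} (hball : Metric.closedBall c r ⊆ convexHull ℝ (γ '' s)) :
    ENNReal.ofReal (2 * π * r) ≤ eVariationOn γ s := by
  obtain ⟨w, hw⟩ := exists_orthonormal_fin_two hE
  have limit : Tendsto (fun m : ℕ ↦ 4 * r * (m * Real.sin (π / m / 2))) atTop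
      (𝓝 (2 * π * r)) := by
    simpa only [div_right_comm π, show 4 * r * (π / 2) = 2 * π * r by ring] using
      (tendsto_natCast_mul_sin_div_atTop (π / 2)).const_mul (4 * r)
  exact le_of_tendsto' (ENNReal.tendsto_ofReal limit)
    (ofReal_four_mul_sin_le_eVariationOn hw ha hb hclosed hr hball)

/-- **A closed curve whose convex hull contains a ball of radius `r` has length at
least `2πr`.**  Here `γ : [0,1] → ℝ³` is a Lipschitz closed curve and its length is
its total variation `eVariationOn γ [0,1]`. -/
theorem length_ge_two_pi_r_of_ball_subset_convexHull
    (γ : ℝ → EuclideanSpace ℝ (Fin 3)) (C : NNReal)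
    (hlip : LipschitzOnWith C γ (Set.Icc 0 1))
    (hclosed : γ 0 = γ 1)
    (r : ℝ) (hr : 0 < r) (c : EuclideanSpace ℝ (Fin 3))
    (hball : Metric.closedBall c r ⊆ convexHull ℝ (γ '' Set.Icc 0 1)) :
    ENNReal.ofReal (2 * Real.pi * r) ≤ eVariationOn γ (Set.Icc 0 1) :=
  length_ge_two_pi_r_of_ball_subset_convexHull_general
    (Module.one_lt_rank_of_one_lt_finrank (by simp)) (isLeast_Icc zero_le_one)
    (isGreatest_Icc zero_le_one) hclosed hr.le hball
end
end

section
/- Let K ⊆ ℝ² be a compact convex set with nonempty interior, with area A, boundary length L, circumradius R and inradius r. Then Bonnesen's inequality holds: L² − 4πA ≥ π²(R − r)². -/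
open Set MeasureTheory

noncomputable section

/-- The inradius of a set `K ⊆ ℝ²`: the supremum of radii `ρ ≥ 0` of closed balls
contained in `K`. -/
def inradius (K : Set (EuclideanSpace ℝ (Fin 2))) : ℝ :=
  sSup { ρ : ℝ | 0 ≤ ρ ∧ ∃ c : EuclideanSpace ℝ (Fin 2), Metric.closedBall c ρ ⊆ K }

/-- The circumradius of a set `K ⊆ ℝ²`: the infimum of radii `ρ ≥ 0` of closed balls
containing `K`. -/
def circumradius (K : Set (EuclideanSpace ℝ (Fin 2))) : ℝ :=
  sInf { ρ : ℝ | 0 ≤ ρ ∧ ∃ c : EuclideanSpace ℝ (Fin 2), K ⊆ Metric.closedBall c ρ }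

/-!
Let `h θ` be the support function of `K` in direction `θ`. Averaging the circumscribed polygons with
equally spaced normals over all rotations and refining them gives `A ≤ ½ ∫ (h² - h'²)`, while
Cauchy's formula for inscribed polygons gives `∫ h ≤ L`. Translate the center of an incircle, or of
the circumcircle, of radius `ρ` to the origin. By extremality the circle touches the boundary of `K`
in every closed half circle of directions, so `h - ρ` vanishes at least once on every arc of length
`π`, and Wirtinger's inequality between consecutive zeros gives `∫ (h - ρ)² ≤ ∫ h'²`, that is,
`A ≤ ρ L - π ρ²` or `(2πρ - L)² ≤ L² - 4πA`. Adding these for `ρ = R` and `ρ = r` eliminates `L`, as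
`(a - b)² ≤ 2 (a² + b²)`.
-/

open Metric Topology Filter
open scoped RealInnerProductSpace Pointwise NNReal ENNReal Real

local notation "ℝ²" => EuclideanSpace ℝ (Fin 2)

section SupportFunction

variable {E : Type*} [NormedAddCommGroup E] [InnerProductSpace ℝ E] {K P : Set E} {c u x : E}
  {ρ ε a : ℝ}

/-- The support function `h_K` of a convex body `K`, here defined on all vectors `u` (not only on
unit vectors) of an inner product space. -/
def supportFun (K : Set E) (u : E) : ℝ :=
  sSup ((fun x ↦ ⟪x, u⟫) '' K)

theorem inner_le_supportFun (hK : IsCompact K) (hx : x ∈ K) (u : E) : ⟪x, u⟫ ≤ supportFun K u :=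
  le_csSup (hK.bddAbove_image (by fun_prop)) (mem_image_of_mem _ hx)

theorem supportFun_le (hne : K.Nonempty) (h : ∀ x ∈ K, ⟪x, u⟫ ≤ a) : supportFun K u ≤ a :=
  csSup_le (hne.image _) (forall_mem_image.2 h)

theorem exists_inner_eq_supportFun (hK : IsCompact K) (hne : K.Nonempty) (u : E) :
    ∃ x ∈ K, ⟪x, u⟫ = supportFun K u :=
  (hK.image (by fun_prop)).sSup_mem (hne.image _)

theorem exists_lipschitzWith_supportFun (hK : IsCompact K) (hne : K.Nonempty) :
    ∃ C, LipschitzWith C (supportFun K) := by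
  obtain ⟨M, hM⟩ := hK.isBounded.exists_norm_le
  refine ⟨M.toNNReal, LipschitzWith.of_le_add_mul _ fun u v ↦ supportFun_le hne fun x hx ↦ ?_⟩
  calc ⟪x, u⟫ = ⟪x, v⟫ + ⟪x, u - v⟫ := by rw [inner_sub_right]; ring
    _ ≤ supportFun K v + ‖x‖ * ‖u - v‖ :=
        add_le_add (inner_le_supportFun hK hx v) (real_inner_le_norm _ _)
    _ ≤ supportFun K v + M.toNNReal * dist u v := by
        rw [dist_eq_norm]
        gcongr
        exact (hM x hx).trans (Real.le_coe_toNNReal M)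

theorem supportFun_vadd (hK : IsCompact K) (hne : K.Nonempty) (c u : E) :
    supportFun (c +ᵥ K) u = ⟪c, u⟫ + supportFun K u := by
  refine le_antisymm (supportFun_le hne.vadd_set ?_) ?_
  · rintro _ ⟨x, hx, rfl⟩
    simpa [inner_add_left] using inner_le_supportFun hK hx u
  · obtain ⟨x, hx, hxu⟩ := exists_inner_eq_supportFun hK hne u
    rw [← hxu, ← inner_add_left]
    exact inner_le_supportFun (hK.vadd c) (vadd_mem_vadd_set hx) u

theorem supportFun_le_add_of_forall_dist_le (hK : K.Nonempty) (hP : IsCompact P) (hu : ‖u‖ = 1)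
    (h : ∀ x ∈ K, ∃ y ∈ P, dist x y ≤ ε) : supportFun K u ≤ supportFun P u + ε := by
  refine supportFun_le hK fun x hx ↦ ?_
  obtain ⟨y, hy, hxy⟩ := h x hx
  calc ⟪x, u⟫ = ⟪y, u⟫ + ⟪x - y, u⟫ := by rw [inner_sub_left]; ring
    _ ≤ supportFun P u + ‖x - y‖ * ‖u‖ :=
        add_le_add (inner_le_supportFun hP hy u) (real_inner_le_norm _ _)
    _ ≤ supportFun P u + ε := by rw [hu, mul_one, ← dist_eq_norm]; gcongr

theorem mem_frontier_of_inner_eq_supportFun (hK : IsCompact K) (hu : u ≠ 0) (hx : x ∈ K)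
    (hxu : ⟪x, u⟫ = supportFun K u) : x ∈ frontier K := by
  rw [frontier, hK.isClosed.closure_eq]
  refine ⟨hx, fun hxi ↦ ?_⟩
  have hcont : ContinuousAt (fun t : ℝ ↦ x + t • u) 0 := by fun_prop
  obtain ⟨t, hxt, ht⟩ : ∃ t : ℝ, x + t • u ∈ K ∧ 0 < t :=
    ((hcont.eventually (by simpa using mem_interior_iff_mem_nhds.1 hxi)).filter_mono
      nhdsWithin_le_nhds |>.and self_mem_nhdsWithin : ∀ᶠ t in 𝓝[>] (0 : ℝ), _).exists
  have hle := inner_le_supportFun hK hxt u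
  rw [inner_add_left, real_inner_smul_left, real_inner_self_eq_norm_sq, ← hxu] at hle
  have : 0 < t * ‖u‖ ^ 2 := by positivity
  linarith

theorem supportFun_frontier (hK : IsCompact K) (hne : K.Nonempty) (hu : u ≠ 0) :
    supportFun (frontier K) u = supportFun K u := by
  obtain ⟨x, hx, hxu⟩ := exists_inner_eq_supportFun hK hne u
  have hxf := mem_frontier_of_inner_eq_supportFun hK hu hx hxu
  have hfK : frontier K ⊆ K := hK.isClosed.frontier_subset
  refine le_antisymm (supportFun_le ⟨x, hxf⟩ fun y hy ↦ inner_le_supportFun hK (hfK hy) u) ?_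
  rw [← hxu]
  exact inner_le_supportFun (hK.of_isClosed_subset isClosed_frontier hfK) hxf u

theorem inner_lt_supportFun_of_mem_interior (hK : IsCompact K) (hu : u ≠ 0)
    (hx : x ∈ interior K) : ⟪x, u⟫ < supportFun K u :=
  (inner_le_supportFun hK (interior_subset hx) u).lt_of_ne fun h ↦
    (mem_frontier_of_inner_eq_supportFun hK hu (interior_subset hx) h).2 hx

theorem exists_norm_eq_one_supportFun_lt_inner [CompleteSpace E] (hK : IsCompact K)
    (hconv : Convex ℝ K) (hne : K.Nonempty) (hx : x ∉ K) :
    ∃ u : E, ‖u‖ = 1 ∧ supportFun K u < ⟪x, u⟫ := by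
  obtain ⟨f, s, hfK, hfx⟩ := geometric_hahn_banach_closed_point hconv hK.isClosed hx
  obtain ⟨v, rfl⟩ := (InnerProductSpace.toDual ℝ E).surjective f
  simp only [InnerProductSpace.toDual_apply_apply] at hfK hfx
  obtain ⟨y, hy⟩ := hne
  have hv : v ≠ 0 := by
    rintro rfl
    simp only [inner_zero_left] at hfK hfx
    exact lt_asymm hfx (hfK y hy)
  refine ⟨‖v‖⁻¹ • v, norm_smul_inv_norm hv, ?_⟩
  have hpos : 0 < ‖v‖⁻¹ := by positivity
  calc supportFun K (‖v‖⁻¹ • v) ≤ ‖v‖⁻¹ * s := supportFun_le ⟨y, hy⟩ fun z hz ↦ by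
        rw [real_inner_smul_right, real_inner_comm]
        exact mul_le_mul_of_nonneg_left (hfK z hz).le hpos.le
    _ < ⟪x, ‖v‖⁻¹ • v⟫ := by
        rw [real_inner_smul_right, real_inner_comm]
        exact mul_lt_mul_of_pos_left hfx hpos

theorem closedBall_subset_iff_forall_le_supportFun [CompleteSpace E] (hK : IsCompact K)
    (hconv : Convex ℝ K) (hne : K.Nonempty) (hρ : 0 ≤ ρ) :
    closedBall c ρ ⊆ K ↔ ∀ u : E, ‖u‖ = 1 → ρ ≤ supportFun K u - ⟪c, u⟫ := by
  refine ⟨fun h u hu ↦ ?_, fun h x hx ↦ ?_⟩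
  · have hmem : c + ρ • u ∈ K := h (by simp [norm_smul, hu, abs_of_nonneg hρ])
    have hle := inner_le_supportFun hK hmem u
    rw [inner_add_left, real_inner_smul_left, real_inner_self_eq_norm_sq, hu] at hle
    linarith
  · by_contra hxK
    obtain ⟨u, hu, hlt⟩ := exists_norm_eq_one_supportFun_lt_inner hK hconv hne hxK
    have hle : ⟪x - c, u⟫ ≤ ρ := by
      calc ⟪x - c, u⟫ ≤ ‖x - c‖ * ‖u‖ := real_inner_le_norm _ _
        _ ≤ ρ := by rw [hu, mul_one]; exact mem_closedBall_iff_norm.1 hx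
    rw [inner_sub_left] at hle
    linarith [h u hu]

theorem subset_closedBall_iff_forall_supportFun_le [Nontrivial E] (hK : IsCompact K)
    (hne : K.Nonempty) :
    K ⊆ closedBall c ρ ↔ ∀ u : E, ‖u‖ = 1 → supportFun K u - ⟪c, u⟫ ≤ ρ := by
  refine ⟨fun h u hu ↦ ?_, fun h x hx ↦ ?_⟩
  · obtain ⟨x, hx, hxu⟩ := exists_inner_eq_supportFun hK hne u
    calc supportFun K u - ⟪c, u⟫ = ⟪x - c, u⟫ := by rw [← hxu, inner_sub_left]
      _ ≤ ‖x - c‖ * ‖u‖ := real_inner_le_norm _ _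
      _ ≤ ρ := by rw [hu, mul_one]; exact mem_closedBall_iff_norm.1 (h hx)
  · obtain ⟨u, hu, hux⟩ : ∃ u : E, ‖u‖ = 1 ∧ ⟪x - c, u⟫ = ‖x - c‖ := by
      rcases eq_or_ne (x - c) 0 with h0 | h0
      · obtain ⟨u, hu⟩ := exists_norm_eq E zero_le_one
        exact ⟨u, hu, by simp [h0]⟩
      · refine ⟨‖x - c‖⁻¹ • (x - c), norm_smul_inv_norm h0, ?_⟩
        rw [real_inner_smul_right, real_inner_self_eq_norm_sq]
        field_simp
    rw [mem_closedBall_iff_norm, ← hux, inner_sub_left]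
    linarith [h u hu, inner_le_supportFun hK hx u]

end SupportFunction

section Radii

variable {K : Set ℝ²}

theorem isGreatest_inradius (hK : IsCompact K) (hconv : Convex ℝ K) (hne : K.Nonempty) :
    IsGreatest {ρ : ℝ | 0 ≤ ρ ∧ ∃ c, closedBall c ρ ⊆ K} (inradius K) := by
  obtain ⟨v, hv⟩ := exists_norm_eq ℝ² zero_le_one
  let S : Set (ℝ² × ℝ) := (K ×ˢ Icc 0 ((supportFun K v + supportFun K (-v)) / 2)) ∩
    {p | ∀ u : ℝ², ‖u‖ = 1 → p.2 ≤ supportFun K u - ⟪p.1, u⟫}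
  have hS : IsCompact S := by
    refine (hK.prod isCompact_Icc).inter_right ?_
    simp only [ofPred_forall]
    exact isClosed_iInter fun u ↦ isClosed_iInter fun _ ↦ isClosed_le (by fun_prop) (by fun_prop)
  have himage : {ρ : ℝ | 0 ≤ ρ ∧ ∃ c, closedBall c ρ ⊆ K} = Prod.snd '' S := by
    ext ρ
    constructor
    · rintro ⟨hρ, c, hc⟩
      have hsupp := (closedBall_subset_iff_forall_le_supportFun hK hconv hne hρ).1 hc
      refine ⟨(c, ρ), ⟨⟨hc (mem_closedBall_self hρ), hρ, ?_⟩, hsupp⟩, rfl⟩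
      have hneg := hsupp (-v) (by rwa [norm_neg])
      rw [inner_neg_right] at hneg
      linarith [hsupp v hv]
    · rintro ⟨⟨c, ρ⟩, ⟨⟨-, hρ, -⟩, hc⟩, rfl⟩
      exact ⟨hρ, c, (closedBall_subset_iff_forall_le_supportFun hK hconv hne hρ).2 hc⟩
  obtain ⟨x₀, hx₀⟩ := hne
  have h0 : {ρ : ℝ | 0 ≤ ρ ∧ ∃ c, closedBall c ρ ⊆ K}.Nonempty :=
    ⟨0, le_rfl, x₀, by simpa using hx₀⟩
  unfold inradius
  rw [himage] at h0 ⊢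
  exact (hS.image continuous_snd).isGreatest_sSup h0

theorem isLeast_circumradius (hK : IsCompact K) (hne : K.Nonempty) :
    IsLeast {ρ : ℝ | 0 ≤ ρ ∧ ∃ c, K ⊆ closedBall c ρ} (circumradius K) := by
  obtain ⟨x₀, hx₀⟩ := hne
  obtain ⟨R₀, hR₀⟩ := hK.isBounded.subset_closedBall x₀
  have hR₀_nonneg : 0 ≤ R₀ := dist_nonneg.trans (hR₀ hx₀)
  let S : Set (ℝ² × ℝ) := (closedBall x₀ R₀ ×ˢ Icc 0 R₀) ∩ {p | ∀ x ∈ K, dist x p.1 ≤ p.2}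
  have hS : IsCompact S := by
    refine ((isCompact_closedBall x₀ R₀).prod isCompact_Icc).inter_right ?_
    simp only [ofPred_forall]
    exact isClosed_iInter fun x ↦ isClosed_iInter fun _ ↦ isClosed_le (by fun_prop) (by fun_prop)
  obtain ⟨⟨c, ρ⟩, ⟨⟨-, hρ, hρR₀⟩, hc⟩, hmin⟩ := hS.exists_isMinOn
    ⟨(x₀, R₀), ⟨mem_closedBall_self hR₀_nonneg, hR₀_nonneg, le_rfl⟩, hR₀⟩ continuousOn_snd
  have hleast : IsLeast {ρ : ℝ | 0 ≤ ρ ∧ ∃ c, K ⊆ closedBall c ρ} ρ := by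
    refine ⟨⟨hρ, c, hc⟩, ?_⟩
    rintro ρ' ⟨hρ', c', hc'⟩
    rcases le_total ρ' R₀ with h | h
    · have hc'x₀ : c' ∈ closedBall x₀ R₀ := (mem_closedBall'.1 (hc' hx₀)).trans h
      exact hmin (⟨⟨hc'x₀, hρ', h⟩, hc'⟩ : (c', ρ') ∈ S)
    · exact hρR₀.trans h
  rwa [circumradius, hleast.csInf_eq]

theorem exists_forall_le_sub_mul_of_isCompact {X : Type*} [TopologicalSpace X] {S : Set X}
    {f g : X → ℝ} (hS : IsCompact S) (hf : Continuous f) (hg : Continuous g)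
    (hf0 : ∀ u ∈ S, 0 ≤ f u) (hfg : ∀ u ∈ S, 0 ≤ g u → 0 < f u) :
    ∃ t b : ℝ, 0 < b ∧ ∀ u ∈ S, b ≤ f u - t * g u := by
  have hS' : IsCompact (S ∩ {u | 0 ≤ g u}) := hS.inter_right (isClosed_le continuous_const hg)
  obtain ⟨m, hm, hmf⟩ := hS'.exists_forall_le' hf.continuousOn fun u hu ↦ hfg u hu.1 hu.2
  obtain ⟨G, hG, hgG⟩ := (hS.image hg).isBounded.exists_pos_norm_le
  simp only [forall_mem_image, Real.norm_eq_abs] at hgG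
  have htG : m / (2 * G) * G = m / 2 := by field_simp
  have ht : 0 < m / (2 * G) := by positivity
  refine ⟨m / (2 * G), hS.exists_forall_le' (by fun_prop) fun u hu ↦ ?_⟩
  rcases le_or_gt 0 (g u) with hgu | hgu
  · nlinarith [ht, hmf u ⟨hu, hgu⟩, hgG hu, le_abs_self (g u)]
  · nlinarith [ht, hf0 u hu]

variable {c : ℝ²}

theorem exists_contact_inradius (hK : IsCompact K) (hconv : Convex ℝ K) (hne : K.Nonempty)
    (hc : closedBall c (inradius K) ⊆ K) (v : ℝ²) :
    ∃ u : ℝ², ‖u‖ = 1 ∧ 0 ≤ ⟪v, u⟫ ∧ supportFun K u - ⟪c, u⟫ = inradius K := by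
  have hgreatest := isGreatest_inradius hK hconv hne
  have hr : 0 ≤ inradius K := hgreatest.1.1
  have hsupp := (closedBall_subset_iff_forall_le_supportFun hK hconv hne hr).1 hc
  obtain ⟨C, hC⟩ := exists_lipschitzWith_supportFun hK hne
  have hcont := hC.continuous
  by_contra! hcontact
  obtain ⟨t, b, hb, hbt⟩ := exists_forall_le_sub_mul_of_isCompact (isCompact_sphere (0 : ℝ²) 1)
    (f := fun u ↦ supportFun K u - ⟪c, u⟫ - inradius K) (g := fun u ↦ ⟪v, u⟫)
    (by fun_prop) (by fun_prop) (fun u hu ↦ sub_nonneg.2 (hsupp u (by simpa using hu)))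
    fun u hu hvu ↦ by
      rw [mem_sphere_zero_iff_norm] at hu
      exact sub_pos.2 ((hsupp u hu).lt_of_ne' (hcontact u hu hvu))
  have hbigger : closedBall (c + t • v) (inradius K + b) ⊆ K := by
    refine (closedBall_subset_iff_forall_le_supportFun hK hconv hne (by linarith)).2 fun u hu ↦ ?_
    rw [inner_add_left, real_inner_smul_left]
    linarith [hbt u (by simpa using hu)]
  linarith [hgreatest.2 ⟨by linarith, _, hbigger⟩]

theorem exists_contact_circumradius (hK : IsCompact K) (hne : K.Nonempty)
    (hc : K ⊆ closedBall c (circumradius K)) (v : ℝ²) :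
    ∃ u : ℝ², ‖u‖ = 1 ∧ 0 ≤ ⟪v, u⟫ ∧ supportFun K u - ⟪c, u⟫ = circumradius K := by
  have hsupp := (subset_closedBall_iff_forall_supportFun_le hK hne).1 hc
  obtain ⟨C, hC⟩ := exists_lipschitzWith_supportFun hK hne
  have hcont := hC.continuous
  by_contra! hcontact
  obtain ⟨t, b, hb, hbt⟩ := exists_forall_le_sub_mul_of_isCompact (isCompact_sphere (0 : ℝ²) 1)
    (f := fun u ↦ circumradius K - (supportFun K u - ⟪c, u⟫)) (g := fun u ↦ ⟪v, u⟫)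
    (by fun_prop) (by fun_prop) (fun u hu ↦ sub_nonneg.2 (hsupp u (by simpa using hu)))
    fun u hu hvu ↦ by
      rw [mem_sphere_zero_iff_norm] at hu
      exact sub_pos.2 ((hsupp u hu).lt_of_ne (hcontact u hu hvu))
  have hsmaller : K ⊆ closedBall (c - t • v) (circumradius K - b) := by
    refine (subset_closedBall_iff_forall_supportFun_le hK hne).2 fun u hu ↦ ?_
    rw [inner_sub_left, real_inner_smul_left]
    linarith [hbt u (by simpa using hu)]
  obtain ⟨x, hx⟩ := hne
  have hnonneg : 0 ≤ circumradius K - b := dist_nonneg.trans (hsmaller hx)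
  linarith [(isLeast_circumradius hK ⟨x, hx⟩).2 ⟨hnonneg, _, hsmaller⟩]

end Radii

section UnitVec

variable {α : ℝ}

/-- The unit vector `u_θ` of the plane in direction `θ`, so that `θ ↦ supportFun K (unitVec θ)` is
the support function in its usual angular form. -/
def unitVec (θ : ℝ) : ℝ² :=
  !₂[Real.cos θ, Real.sin θ]

theorem inner_unitVec (v : ℝ²) (θ : ℝ) : ⟪v, unitVec θ⟫ = v 0 * Real.cos θ + v 1 * Real.sin θ := by
  rw [PiLp.inner_apply]
  simp [unitVec, mul_comm]

theorem inner_unitVec_unitVec (θ φ : ℝ) : ⟪unitVec θ, unitVec φ⟫ = Real.cos (θ - φ) := by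
  rw [inner_unitVec, Real.cos_sub]
  simp [unitVec]

@[simp]
theorem norm_unitVec (θ : ℝ) : ‖unitVec θ‖ = 1 := by
  rw [norm_eq_sqrt_real_inner, inner_unitVec_unitVec, sub_self, Real.cos_zero, Real.sqrt_one]

theorem unitVec_ne_zero (θ : ℝ) : unitVec θ ≠ 0 :=
  norm_pos_iff.1 (by simp)

theorem unitVec_add (θ δ : ℝ) :
    unitVec (θ + δ) = Real.cos δ • unitVec θ + Real.sin δ • unitVec (θ + π / 2) := by
  ext i
  fin_cases i <;> simp [unitVec, Real.cos_add, Real.sin_add] <;> ring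

theorem unitVec_add_pi (θ : ℝ) : unitVec (θ + π) = -unitVec θ := by
  rw [unitVec_add]
  simp

theorem periodic_unitVec : Function.Periodic unitVec (2 * π) := fun θ ↦ by
  rw [unitVec_add]
  simp

theorem lipschitzWith_unitVec : LipschitzWith 1 unitVec := by
  refine LipschitzWith.of_dist_le_mul fun θ φ ↦ ?_
  rw [NNReal.coe_one, one_mul, dist_eq_norm, Real.dist_eq]
  refine le_of_sq_le_sq ?_ (abs_nonneg _)
  rw [sq_abs, norm_sub_sq_real, inner_unitVec_unitVec, norm_unitVec, norm_unitVec]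
  linarith [Real.one_sub_sq_div_two_le_cos (x := θ - φ)]

theorem exists_eq_norm_smul_unitVec (v : ℝ²) : ∃ α, v = ‖v‖ • unitVec α := by
  have hnorm : ‖v‖ = ‖(⟨v 0, v 1⟩ : ℂ)‖ := by
    rw [EuclideanSpace.norm_eq, Complex.norm_eq_sqrt_sq_add_sq]
    simp
  refine ⟨Complex.arg ⟨v 0, v 1⟩, ?_⟩
  ext i
  fin_cases i <;> simp [unitVec, hnorm]

theorem exists_unitVec_eq_of_inner_nonneg {u : ℝ²} (hu : ‖u‖ = 1)
    (h : 0 ≤ ⟪unitVec (α + π / 2), u⟫) : ∃ θ ∈ Icc α (α + π), unitVec θ = u := by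
  obtain ⟨β, hβ⟩ := exists_eq_norm_smul_unitVec u
  obtain ⟨θ, hθ, hθβ⟩ := periodic_unitVec.exists_mem_Ico Real.two_pi_pos β α
  rw [hu, one_smul, hθβ] at hβ
  refine ⟨θ, ⟨hθ.1, ?_⟩, hβ.symm⟩
  rw [hβ, inner_unitVec_unitVec, ← Real.cos_neg, neg_sub, ← sub_sub, Real.cos_sub_pi_div_two] at h
  by_contra! hlt
  have hneg := Real.sin_neg_of_neg_of_neg_pi_lt (x := θ - α - 2 * π) (by linarith [hθ.2])
    (by linarith)
  rw [Real.sin_sub_two_pi] at hneg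
  exact hneg.not_ge h

end UnitVec

section Wirtinger

variable {g : ℝ → ℝ} {a b k : ℝ}

theorem cos_mul_sub_midpoint_pos (hk : 0 ≤ k) (hkab : k * (b - a) < π) {x : ℝ} (hx : x ∈ Icc a b) :
    0 < Real.cos (k * (x - (a + b) / 2)) :=
  Real.cos_pos_of_mem_Ioo
    ⟨by nlinarith [mul_nonneg hk (sub_nonneg.2 hx.1)],
      by nlinarith [mul_nonneg hk (sub_nonneg.2 hx.2)]⟩

theorem hasDerivAt_mul_tan_mul_sub {m x : ℝ} (h : Real.cos (k * (x - m)) ≠ 0) :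
    HasDerivAt (fun x ↦ k * Real.tan (k * (x - m)))
      (k ^ 2 + (k * Real.tan (k * (x - m))) ^ 2) x := by
  have hlin : HasDerivAt (fun x ↦ k * (x - m)) k x := by
    simpa using ((hasDerivAt_id x).sub_const m).const_mul k
  refine (((Real.hasDerivAt_tan h).comp x hlin).const_mul k).congr_deriv ?_
  rw [← Real.inv_one_add_tan_sq h]
  simp only [one_div, inv_inv]
  ring

theorem contDiffAt_mul_tan_mul_sub {m x : ℝ} (h : Real.cos (k * (x - m)) ≠ 0) :
    ContDiffAt ℝ 1 (fun x ↦ k * Real.tan (k * (x - m))) x :=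
  contDiffAt_const.mul <| ContDiffAt.comp (g := Real.tan) (f := fun x ↦ k * (x - m)) x
    (Real.contDiffAt_tan.2 h) (by fun_prop)

theorem sq_mul_integral_sq_le_integral_deriv_sq (hab : a ≤ b) (hk : 0 ≤ k) (hkab : k * (b - a) < π)
    (hg : AbsolutelyContinuousOnInterval g a b)
    (hg' : IntervalIntegrable (fun x ↦ deriv g x ^ 2) volume a b) (hga : g a = 0) (hgb : g b = 0) :
    k ^ 2 * ∫ x in a..b, g x ^ 2 ≤ ∫ x in a..b, deriv g x ^ 2 := by
  -- `P` solves the Riccati equation `P' = k² + P²`, so `g'² - k² g² + (g² P)' = (g' + g P)²`.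
  let P : ℝ → ℝ := fun x ↦ k * Real.tan (k * (x - (a + b) / 2))
  have hcos := fun x (hx : x ∈ Icc a b) ↦ (cos_mul_sub_midpoint_pos hk hkab hx).ne'
  have hP : AbsolutelyContinuousOnInterval P a b :=
    ContDiffOn.absolutelyContinuousOnInterval fun x hx ↦
      (contDiffAt_mul_tan_mul_sub (hcos x (uIcc_of_le hab ▸ hx))).contDiffWithinAt
  have hQ := (hg.fun_mul hg).fun_mul hP
  have hQ0 : ∫ x in a..b, deriv (fun x ↦ g x * g x * P x) x = 0 := by
    rw [hQ.integral_deriv_eq_sub, hga, hgb]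
    ring
  have hg2 : IntervalIntegrable (fun x ↦ k ^ 2 * g x ^ 2) volume a b :=
    ((hg.continuousOn.pow 2).const_mul _).intervalIntegrable
  have hnonneg : 0 ≤ ∫ x in a..b, (deriv g x ^ 2 - k ^ 2 * g x ^ 2 +
      deriv (fun x ↦ g x * g x * P x) x) := by
    refine intervalIntegral.integral_nonneg_of_ae_restrict hab ?_
    filter_upwards [ae_restrict_of_ae hg.ae_differentiableAt, ae_restrict_mem measurableSet_Icc]
      with x hgx hx
    have hgx := (hgx (uIcc_of_le hab ▸ hx)).hasDerivAt
    rw [((hgx.fun_mul hgx).fun_mul (hasDerivAt_mul_tan_mul_sub (hcos x hx))).deriv]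
    simp only [Pi.zero_apply]
    refine (sq_nonneg (deriv g x + g x * P x)).trans_eq ?_
    ring
  rw [intervalIntegral.integral_add (hg'.sub hg2) hQ.intervalIntegrable_deriv,
    intervalIntegral.integral_sub hg' hg2, intervalIntegral.integral_const_mul, hQ0] at hnonneg
  linarith

theorem integral_sq_le_integral_deriv_sq (hab : a ≤ b) (hπ : b - a ≤ π)
    (hg : AbsolutelyContinuousOnInterval g a b)
    (hg' : IntervalIntegrable (fun x ↦ deriv g x ^ 2) volume a b) (hga : g a = 0) (hgb : g b = 0) :
    ∫ x in a..b, g x ^ 2 ≤ ∫ x in a..b, deriv g x ^ 2 := by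
  have hlim : Tendsto (fun k : ℝ ↦ k ^ 2 * ∫ x in a..b, g x ^ 2) (𝓝[<] 1)
      (𝓝 (1 ^ 2 * ∫ x in a..b, g x ^ 2)) :=
    ((continuous_pow 2).mul continuous_const).continuousWithinAt
  rw [one_pow, one_mul] at hlim
  refine le_of_tendsto hlim ?_
  filter_upwards [Ioo_mem_nhdsLT zero_lt_one] with k hk
  refine sq_mul_integral_sq_le_integral_deriv_sq hab hk.1.le ?_ hg hg' hga hgb
  nlinarith [hk.1, hk.2, Real.pi_pos]

end Wirtinger

section SupportArea

variable {f : ℝ → ℝ} {C : ℝ≥0} {a b ρ : ℝ}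

/-- The area `½ ∫ (h² - h'²)` of the convex body with angular support function `h`. -/
def supportArea (h : ℝ → ℝ) : ℝ :=
  1 / 2 * ∫ θ in 0..2 * π, (h θ ^ 2 - deriv h θ ^ 2)

theorem intervalIntegrable_deriv_sq (hf : LipschitzWith C f) (a b : ℝ) :
    IntervalIntegrable (fun x ↦ deriv f x ^ 2) volume a b := by
  refine (intervalIntegrable_const (c := (C : ℝ) ^ 2)).mono_fun
    ((measurable_deriv f).pow_const 2).aestronglyMeasurable (ae_of_all _ fun x ↦ ?_)
  simp only [norm_pow, NNReal.norm_eq]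
  gcongr
  exact norm_deriv_le_of_lipschitz hf

theorem exists_three_points_gap_le {Z : Set ℝ} {p : ℝ} (hZ : IsClosed Z)
    (hmeet : ∀ α, (Z ∩ Icc α (α + p)).Nonempty) :
    ∃ a₀ ∈ Z, ∃ a₁ ∈ Z, ∃ a₂ ∈ Z, a₀ ≤ a₁ ∧ a₁ ≤ a₂ ∧ a₂ ≤ a₀ + 2 * p ∧
      a₁ - a₀ ≤ p ∧ a₂ - a₁ ≤ p ∧ a₀ + 2 * p - a₂ ≤ p := by
  obtain ⟨a₀, ha₀, -⟩ := hmeet 0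
  have hcompact : ∀ α, IsCompact (Z ∩ Icc α (α + p)) := fun α ↦ isCompact_Icc.inter_left hZ
  obtain ⟨a₁, ⟨ha₁, h₀₁, h₁⟩, hmax⟩ := (hcompact a₀).exists_isGreatest (hmeet a₀)
  obtain ⟨a₂, ⟨ha₂, h₂, h₂'⟩, hmin⟩ := (hcompact (a₀ + p)).exists_isLeast (hmeet _)
  refine ⟨a₀, ha₀, a₁, ha₁, a₂, ha₂, h₀₁, by linarith, by linarith, by linarith, ?_, by linarith⟩
  by_contra! hgap
  obtain ⟨z, hz, hz₁, hz₂⟩ := hmeet ((a₁ + (a₂ - p)) / 2)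
  rcases le_total z (a₀ + p) with h | h
  · linarith [hmax ⟨hz, by linarith, h⟩]
  · linarith [hmin ⟨hz, h, by linarith⟩]

theorem periodic_deriv {T : ℝ} (hper : Function.Periodic f T) :
    Function.Periodic (deriv f) T := fun x ↦ by
  rw [← deriv_comp_add_const, funext hper]

theorem integral_sq_le_integral_deriv_sq_of_periodic (hf : LipschitzWith C f)
    (hper : Function.Periodic f (2 * π)) (hzero : ∀ α, ∃ θ ∈ Icc α (α + π), f θ = 0) :
    ∫ x in 0..2 * π, f x ^ 2 ≤ ∫ x in 0..2 * π, deriv f x ^ 2 := by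
  obtain ⟨a₀, h₀, a₁, h₁, a₂, h₂, h₀₁, h₁₂, h₂₀, hgap₁, hgap₂, hgap₀⟩ :=
    exists_three_points_gap_le (Z := {θ | f θ = 0}) (p := π)
      (isClosed_eq hf.continuous continuous_const) fun α ↦
        let ⟨θ, hθ, hfθ⟩ := hzero α; ⟨θ, hfθ, hθ⟩
  have h₀' : f (a₀ + 2 * π) = 0 := (hper a₀).trans h₀
  have hsq := fun a b ↦ (hf.continuous.fun_pow 2).intervalIntegrable (μ := volume) a b
  have hsq' := intervalIntegrable_deriv_sq hf
  have harc : ∀ {a b}, a ≤ b → b - a ≤ π → f a = 0 → f b = 0 →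
      ∫ x in a..b, f x ^ 2 ≤ ∫ x in a..b, deriv f x ^ 2 := fun hab hgap ha hb ↦
    integral_sq_le_integral_deriv_sq hab hgap
      hf.lipschitzOnWith.absolutelyContinuousOnInterval (hsq' _ _) ha hb
  have hshift : ∀ {g : ℝ → ℝ}, Function.Periodic g (2 * π) →
      ∫ x in 0..2 * π, g x ^ 2 = ∫ x in a₀..a₀ + 2 * π, g x ^ 2 := fun hg ↦ by
    simpa using (hg.comp (· ^ 2)).intervalIntegral_add_eq 0 a₀
  rw [hshift hper, hshift (periodic_deriv hper),
    ← intervalIntegral.integral_add_adjacent_intervals (hsq a₀ a₁) (hsq a₁ _),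
    ← intervalIntegral.integral_add_adjacent_intervals (hsq a₁ a₂) (hsq a₂ _),
    ← intervalIntegral.integral_add_adjacent_intervals (hsq' a₀ a₁) (hsq' a₁ _),
    ← intervalIntegral.integral_add_adjacent_intervals (hsq' a₁ a₂) (hsq' a₂ _)]
  exact add_le_add (harc h₀₁ hgap₁ h₀ h₁)
    (add_le_add (harc h₁₂ hgap₂ h₁ h₂) (harc h₂₀ (by linarith) h₂ h₀'))

theorem supportArea_le_of_forall_exists_eq (hf : LipschitzWith C f)
    (hper : Function.Periodic f (2 * π)) (hρ : ∀ α, ∃ θ ∈ Icc α (α + π), f θ = ρ) :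
    supportArea f ≤ ρ * (∫ θ in 0..2 * π, f θ) - π * ρ ^ 2 := by
  have hfi := hf.continuous.intervalIntegrable (μ := volume) 0 (2 * π)
  have hsq := (hf.continuous.fun_pow 2).intervalIntegrable (μ := volume) 0 (2 * π)
  have hwirtinger := integral_sq_le_integral_deriv_sq_of_periodic (f := fun θ ↦ f θ - ρ)
    (C := C) (LipschitzWith.of_dist_le_mul fun x y ↦ by simpa using hf.dist_le_mul x y)
    (fun θ ↦ congrArg (· - ρ) (hper θ)) fun α ↦ by simpa only [sub_eq_zero] using hρ α
  have hexpand : ∫ θ in 0..2 * π, (f θ - ρ) ^ 2 =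
      (∫ θ in 0..2 * π, f θ ^ 2) - 2 * ρ * (∫ θ in 0..2 * π, f θ) + 2 * π * ρ ^ 2 := by
    calc ∫ θ in 0..2 * π, (f θ - ρ) ^ 2 = ∫ θ in 0..2 * π, (f θ ^ 2 - 2 * ρ * f θ + ρ ^ 2) :=
          intervalIntegral.integral_congr fun θ _ ↦ by ring
      _ = _ := by
          rw [intervalIntegral.integral_add (hsq.sub (hfi.const_mul _)) intervalIntegrable_const,
            intervalIntegral.integral_sub hsq (hfi.const_mul _),
            intervalIntegral.integral_const_mul, intervalIntegral.integral_const, sub_zero,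
            smul_eq_mul]
  simp only [deriv_sub_const] at hwirtinger
  rw [supportArea, intervalIntegral.integral_sub hsq (intervalIntegrable_deriv_sq hf _ _)]
  linarith

theorem hasDerivAt_inner_unitVec (c : ℝ²) (θ : ℝ) :
    HasDerivAt (fun θ ↦ ⟪c, unitVec θ⟫) ⟪c, unitVec (θ + π / 2)⟫ θ := by
  simp only [inner_unitVec, Real.cos_add_pi_div_two, Real.sin_add_pi_div_two]
  exact ((Real.hasDerivAt_cos θ).const_mul _).add ((Real.hasDerivAt_sin θ).const_mul _)

theorem lipschitzWith_inner_unitVec (c : ℝ²) : LipschitzWith ‖c‖₊ fun θ ↦ ⟪c, unitVec θ⟫ := by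
  have h := (innerSL ℝ c).lipschitz.comp lipschitzWith_unitVec
  rwa [mul_one, show ‖innerSL ℝ c‖₊ = ‖c‖₊ from NNReal.eq (innerSL_apply_norm ℝ c)] at h

theorem periodic_inner_unitVec (c : ℝ²) : Function.Periodic (fun θ ↦ ⟪c, unitVec θ⟫) (2 * π) :=
  periodic_unitVec.comp (fun u ↦ ⟪c, u⟫)

theorem supportArea_sub_inner_unitVec (hf : LipschitzWith C f) (hper : Function.Periodic f (2 * π))
    (c : ℝ²) : supportArea (fun θ ↦ f θ - ⟪c, unitVec θ⟫) = supportArea f := by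
  set w : ℝ → ℝ := fun θ ↦ ⟪c, unitVec θ⟫
  set w' : ℝ → ℝ := fun θ ↦ w (θ + π / 2)
  have hw_lip : LipschitzWith ‖c‖₊ w := lipschitzWith_inner_unitVec c
  have hw_per : Function.Periodic w (2 * π) := periodic_inner_unitVec c
  have hw_deriv : ∀ θ, HasDerivAt w (w' θ) θ := hasDerivAt_inner_unitVec c
  have hw'_deriv : ∀ θ, HasDerivAt w' (-w θ) θ := fun θ ↦
    ((hw_deriv (θ + π / 2)).comp_add_const θ _).congr_deriv (by
      simp only [w, w', add_assoc, add_halves, unitVec_add_pi, inner_neg_right])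
  let F : ℝ → ℝ := fun θ ↦ (2 * f θ - w θ) * w' θ
  have hac : ∀ {g : ℝ → ℝ} {C}, LipschitzWith C g → AbsolutelyContinuousOnInterval g 0 (2 * π) :=
    fun hg ↦ hg.lipschitzOnWith.absolutelyContinuousOnInterval
  have hw'_lip : LipschitzWith ‖c‖₊ w' := by
    simpa [Function.comp_def] using hw_lip.comp (isometry_add_right (π / 2)).lipschitz
  have hF : AbsolutelyContinuousOnInterval F 0 (2 * π) :=
    (((hac hf).const_mul 2).fun_sub (hac hw_lip)).fun_mul (hac hw'_lip)
  have hF0 : ∫ θ in 0..2 * π, deriv F θ = 0 := by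
    have hFper : F (2 * π) = F 0 := by
      simp only [F, w', add_comm (2 * π) (π / 2), hw_per _, zero_add, hper.eq, hw_per.eq]
    rw [hF.integral_deriv_eq_sub, hFper, sub_self]
  have hint : IntervalIntegrable (fun θ ↦ f θ ^ 2 - deriv f θ ^ 2) volume 0 (2 * π) :=
    ((hf.continuous.fun_pow 2).intervalIntegrable _ _).sub (intervalIntegrable_deriv_sq hf _ _)
  have hsplit : ∫ θ in 0..2 * π, ((f θ - w θ) ^ 2 - deriv (fun θ ↦ f θ - w θ) θ ^ 2) =
      ∫ θ in 0..2 * π, (f θ ^ 2 - deriv f θ ^ 2 + deriv F θ) := by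
    refine intervalIntegral.integral_congr_ae (hf.ae_differentiableAt_real.mono fun θ hθ _ ↦ ?_)
    have hf' := hθ.hasDerivAt
    rw [(hf'.fun_sub (hw_deriv θ)).deriv,
      (((hf'.const_mul 2).fun_sub (hw_deriv θ)).fun_mul (hw'_deriv θ)).deriv]
    ring
  rw [supportArea, hsplit, intervalIntegral.integral_add hint hF.intervalIntegrable_deriv, hF0,
    add_zero, supportArea]

end SupportArea

section Triangles

theorem isClosed_setOf_mul_le_le_mul (H s t : ℝ) :
    IsClosed {p : ℝ × ℝ | p.1 ∈ Icc 0 H ∧ p.2 ∈ Icc (s * p.1) (t * p.1)} :=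
  (isClosed_Icc.preimage continuous_fst).inter
    ((isClosed_le (continuous_const.mul continuous_fst) continuous_snd).inter
      (isClosed_le continuous_snd (continuous_const.mul continuous_fst)))

theorem volume_setOf_mul_le_le_mul {H s t : ℝ} (hH : 0 ≤ H) (hst : s ≤ t) :
    volume {p : ℝ × ℝ | p.1 ∈ Icc 0 H ∧ p.2 ∈ Icc (s * p.1) (t * p.1)} =
      ENNReal.ofReal (H ^ 2 * (t - s) / 2) := by
  set S : Set (ℝ × ℝ) := {p | p.1 ∈ Icc 0 H ∧ p.2 ∈ Icc (s * p.1) (t * p.1)}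
  have hS : MeasurableSet S := (isClosed_setOf_mul_le_le_mul H s t).measurableSet
  have hsection : ∀ x, volume (Prod.mk x ⁻¹' S) =
      (Icc 0 H).indicator (fun x ↦ ENNReal.ofReal ((t - s) * x)) x := fun x ↦ by
    by_cases hx : x ∈ Icc 0 H
    · have hIcc : Prod.mk x ⁻¹' S = Icc (s * x) (t * x) := by ext y; simp [S, hx.1, hx.2]
      rw [indicator_of_mem hx, hIcc, Real.volume_Icc, sub_mul]
    · have hempty : Prod.mk x ⁻¹' S = ∅ := eq_empty_of_forall_notMem fun y hy ↦ hx hy.1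
      rw [indicator_of_notMem hx, hempty, measure_empty]
  rw [Measure.volume_eq_prod, Measure.prod_apply hS]
  simp_rw [hsection]
  rw [lintegral_indicator measurableSet_Icc, ← ofReal_integral_eq_lintegral_ofReal,
    integral_Icc_eq_integral_Ioc, ← intervalIntegral.integral_of_le hH,
    intervalIntegral.integral_const_mul, integral_id]
  · ring_nf
  · exact (Continuous.continuousOn (by fun_prop)).integrableOn_compact isCompact_Icc
  · filter_upwards [ae_restrict_mem measurableSet_Icc] with x hx
    exact mul_nonneg (sub_nonneg.2 hst) hx.1

theorem measurePreserving_inner_unitVec (θ : ℝ) :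
    MeasurePreserving fun v : ℝ² ↦ (⟪v, unitVec θ⟫, ⟪v, unitVec (θ + π / 2)⟫) := by
  have horth : Orthonormal ℝ ![unitVec θ, unitVec (θ + π / 2)] := by
    rw [orthonormal_iff_ite]
    intro i j
    fin_cases i <;> fin_cases j <;> simp [inner_unitVec_unitVec]
  obtain ⟨b, hb⟩ : ∃ b : OrthonormalBasis (Fin 2) ℝ ℝ², ⇑b = ![unitVec θ, unitVec (θ + π / 2)] :=
    ⟨(basisOfOrthonormalOfCardEqFinrank horth (by simp)).toOrthonormalBasis (by simpa using horth),
      by simp⟩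
  have hcoord : (fun v ↦ (⟪v, unitVec θ⟫, ⟪v, unitVec (θ + π / 2)⟫)) =
      (MeasurableEquiv.finTwoArrow ∘ WithLp.ofLp) ∘ b.repr := by
    ext v <;>
      simp [b.repr_apply_apply, hb, real_inner_comm, MeasurableEquiv.finTwoArrow]
  rw [hcoord]
  exact ((volume_preserving_finTwoArrow ℝ).comp (PiLp.volume_preserving_ofLp (Fin 2))).comp
    b.measurePreserving_repr

/-- The triangle spanned by the origin and the side with normal `unitVec θ` of the polygon that has
the values of `h` as support numbers in the equally spaced directions `θ + k δ`. -/
def supportTriangle (h : ℝ → ℝ) (δ θ : ℝ) : Set ℝ² :=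
  {v | ⟪v, unitVec θ⟫ ∈ Icc 0 (h θ) ∧ h θ * ⟪v, unitVec (θ + δ)⟫ ≤ h (θ + δ) * ⟪v, unitVec θ⟫ ∧
    h θ * ⟪v, unitVec (θ - δ)⟫ ≤ h (θ - δ) * ⟪v, unitVec θ⟫}

/-- The area of `supportTriangle h δ θ`. -/
def supportTriangleArea (h : ℝ → ℝ) (δ θ : ℝ) : ℝ :=
  h θ * (h (θ + δ) + h (θ - δ) - 2 * Real.cos δ * h θ) / (2 * Real.sin δ)

theorem volume_supportTriangle {h : ℝ → ℝ} {δ θ : ℝ} (hδ : 0 < Real.sin δ) (hθ : 0 < h θ)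
    (hside : 2 * Real.cos δ * h θ ≤ h (θ + δ) + h (θ - δ)) :
    volume (supportTriangle h δ θ) = ENNReal.ofReal (supportTriangleArea h δ θ) := by
  set s := -(h (θ - δ) - h θ * Real.cos δ) / (h θ * Real.sin δ) with hs
  set t := (h (θ + δ) - h θ * Real.cos δ) / (h θ * Real.sin δ) with ht
  have hst : s ≤ t := by
    rw [hs, ht]
    gcongr
    linarith
  have hpre : supportTriangle h δ θ = (fun v ↦ (⟪v, unitVec θ⟫, ⟪v, unitVec (θ + π / 2)⟫)) ⁻¹'
      {p : ℝ × ℝ | p.1 ∈ Icc 0 (h θ) ∧ p.2 ∈ Icc (s * p.1) (t * p.1)} := by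
    ext v
    have hplus : ⟪v, unitVec (θ + δ)⟫ =
        Real.cos δ * ⟪v, unitVec θ⟫ + Real.sin δ * ⟪v, unitVec (θ + π / 2)⟫ := by
      rw [unitVec_add, inner_add_right, real_inner_smul_right, real_inner_smul_right]
    have hminus : ⟪v, unitVec (θ - δ)⟫ =
        Real.cos δ * ⟪v, unitVec θ⟫ - Real.sin δ * ⟪v, unitVec (θ + π / 2)⟫ := by
      rw [sub_eq_add_neg, unitVec_add, inner_add_right, real_inner_smul_right,
        real_inner_smul_right, Real.cos_neg, Real.sin_neg, neg_mul, ← sub_eq_add_neg]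
    have hpos : 0 < h θ * Real.sin δ := mul_pos hθ hδ
    refine and_congr Iff.rfl (and_comm.trans (and_congr ?_ ?_))
    · rw [hminus, hs, div_mul_eq_mul_div, div_le_iff₀ hpos]
      constructor <;> intro _ <;> linarith
    · rw [hplus, ht, div_mul_eq_mul_div, le_div_iff₀ hpos]
      constructor <;> intro _ <;> linarith
  rw [hpre, (measurePreserving_inner_unitVec θ).measure_preimage
      (isClosed_setOf_mul_le_le_mul _ s t).measurableSet.nullMeasurableSet,
    volume_setOf_mul_le_le_mul hθ.le hst, supportTriangleArea, hs, ht]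
  congr 1
  field_simp
  ring

end Triangles

section Cover

variable {h : ℝ → ℝ} {K : Set ℝ²} {C : ℝ≥0}

theorem exists_lt_forall_le_of_periodic {q : ℤ → ℝ} {N : ℕ} (hN : 0 < N)
    (hq : Function.Periodic q N) : ∃ k < N, ∀ j, q j ≤ q k := by
  obtain ⟨k, hk, hmax⟩ := Finset.exists_max_image (Finset.range N) (fun k ↦ q k) ⟨0, by simpa⟩
  refine ⟨k, by simpa using hk, fun j ↦ ?_⟩
  have hN' : (N : ℤ) ≠ 0 := by exact_mod_cast hN.ne'
  obtain ⟨i, hi⟩ := Int.eq_ofNat_of_zero_le (Int.emod_nonneg j hN')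
  have hiN : i < N := by
    have := Int.emod_lt_of_pos j (b := N) (by exact_mod_cast hN)
    lia
  have hji : q j = q i := by
    rw [← Int.emod_add_ediv_mul j N, hi]
    exact hq.int_mul (j / N) i
  rw [hji]
  exact hmax i (by simpa using hiN)

/- For `v ∈ K` the ratio `⟪v, u_θ⟫ / h θ` is at most `1`; a direction maximizing it among the
normals gives the triangle containing `v`. -/
theorem subset_iUnion_supportTriangle (hper : Function.Periodic h (2 * π)) (hpos : ∀ θ, 0 < h θ)
    (hK : ∀ v ∈ K, ∀ θ, ⟪v, unitVec θ⟫ ≤ h θ) {M : ℕ} (hM : 0 < M) (φ : ℝ) :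
    K ⊆ ⋃ k ∈ Finset.range (2 * M), supportTriangle h (π / M) (φ + k * (π / M)) := by
  intro v hv
  have hMδ : M * (π / M) = π := by field_simp
  let q : ℤ → ℝ := fun k ↦ ⟪v, unitVec (φ + k * (π / M))⟫ / h (φ + k * (π / M))
  have hq : Function.Periodic q ↑(2 * M) := fun k ↦ by
    have hshift : φ + ((k + ↑(2 * M) : ℤ) : ℝ) * (π / M) = φ + k * (π / M) + 2 * π := by
      push_cast
      linear_combination 2 * hMδ
    simp only [q, hshift, periodic_unitVec _, hper _]
  obtain ⟨k, hk, hmax⟩ := exists_lt_forall_le_of_periodic (by lia) hq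
  simp only [q, div_le_div_iff₀ (hpos _) (hpos _)] at hmax
  have hnonneg : 0 ≤ ⟪v, unitVec (φ + k * (π / M))⟫ := by
    have hopp := hmax (k + M)
    have hshift : φ + ((k + M : ℤ) : ℝ) * (π / M) = φ + k * (π / M) + π := by
      push_cast
      linear_combination hMδ
    rw [hshift, unitVec_add_pi, inner_neg_right, Int.cast_natCast] at hopp
    by_contra! hneg
    nlinarith [hpos (φ + k * (π / M)), hpos (φ + k * (π / M) + π)]
  refine mem_iUnion₂.2 ⟨k, Finset.mem_range.2 hk, ⟨hnonneg, hK v hv _⟩, ?_, ?_⟩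
  · have hnext := hmax (k + 1)
    push_cast [add_mul, one_mul, ← add_assoc] at hnext
    linarith
  · have hprev := hmax (k - 1)
    push_cast [sub_mul, one_mul, ← add_sub_assoc] at hprev
    linarith

theorem volume_le_sum_supportTriangleArea (hper : Function.Periodic h (2 * π))
    (hpos : ∀ θ, 0 < h θ) (hK : ∀ v ∈ K, ∀ θ, ⟪v, unitVec θ⟫ ≤ h θ) {M : ℕ} (hM : 2 ≤ M)
    (hside : ∀ δ θ, 2 * Real.cos δ * h θ ≤ h (θ + δ) + h (θ - δ)) (φ : ℝ) :
    (volume K).toReal ≤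
      ∑ k ∈ Finset.range (2 * M), supportTriangleArea h (π / M) (φ + k * (π / M)) := by
  have hsin : 0 < Real.sin (π / M) :=
    Real.sin_pos_of_pos_of_lt_pi (by positivity) (div_lt_self Real.pi_pos (by exact_mod_cast hM))
  have hnonneg : ∀ θ, 0 ≤ supportTriangleArea h (π / M) θ := fun θ ↦
    div_nonneg (mul_nonneg (hpos θ).le (sub_nonneg.2 (hside _ θ))) (by positivity)
  refine ENNReal.toReal_le_of_le_ofReal (Finset.sum_nonneg fun k _ ↦ hnonneg _) ?_
  calc volume K ≤ ∑ k ∈ Finset.range (2 * M),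
        volume (supportTriangle h (π / M) (φ + k * (π / M))) :=
        (measure_mono (subset_iUnion_supportTriangle hper hpos hK (by lia) φ)).trans
          (measure_biUnion_finset_le _ _)
    _ = _ := by
        rw [ENNReal.ofReal_sum_of_nonneg fun k _ ↦ hnonneg _]
        exact Finset.sum_congr rfl fun k _ ↦ volume_supportTriangle hsin (hpos _) (hside _ _)

theorem integral_sum_add_mul_eq {F : ℝ → ℝ} (hF : Continuous F) (δ : ℝ) (N : ℕ) :
    ∫ φ in 0..δ, ∑ k ∈ Finset.range N, F (φ + k * δ) = ∫ θ in 0..N * δ, F θ := by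
  rw [intervalIntegral.integral_finsetSum fun k _ ↦
    Continuous.intervalIntegrable (by fun_prop) _ _]
  have := intervalIntegral.sum_integral_adjacent_intervals (μ := volume) (f := F)
    (a := fun k : ℕ ↦ k * δ) (n := N) fun k _ ↦ hF.intervalIntegrable _ _
  simpa [add_mul, add_comm] using this

theorem integral_comp_add_of_periodic {F : ℝ → ℝ} {T : ℝ} (hF : Function.Periodic F T) (δ : ℝ) :
    ∫ θ in 0..T, F (θ + δ) = ∫ θ in 0..T, F θ := by
  simpa [add_comm] using hF.intervalIntegral_add_eq δ 0

theorem integral_supportTriangleArea (hcont : Continuous h) (hper : Function.Periodic h (2 * π))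
    (δ : ℝ) :
    ∫ θ in 0..2 * π, supportTriangleArea h δ θ =
      ((1 - Real.cos δ) * (∫ θ in 0..2 * π, h θ ^ 2) -
        1 / 2 * ∫ θ in 0..2 * π, (h (θ + δ) - h θ) ^ 2) / Real.sin δ := by
  have hint {g : ℝ → ℝ} (hg : Continuous g) : IntervalIntegrable g volume 0 (2 * π) :=
    hg.intervalIntegrable _ _
  have hper_add (δ : ℝ) : Function.Periodic (fun θ ↦ h (θ + δ)) (2 * π) := fun θ ↦ by
    simp only [add_right_comm θ, hper _]
  have hsq : ∫ θ in 0..2 * π, h (θ + δ) ^ 2 = ∫ θ in 0..2 * π, h θ ^ 2 :=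
    integral_comp_add_of_periodic (F := fun θ ↦ h θ ^ 2) (fun θ ↦ by simp only [hper θ]) δ
  have hprev : ∫ θ in 0..2 * π, h θ * h (θ - δ) = ∫ θ in 0..2 * π, h θ * h (θ + δ) := by
    have := integral_comp_add_of_periodic (F := fun θ ↦ h θ * h (θ + δ))
      (hper.mul (hper_add δ)) (-δ)
    simpa [← sub_eq_add_neg, mul_comm] using this
  have hdiff : ∫ θ in 0..2 * π, (h (θ + δ) - h θ) ^ 2 =
      2 * (∫ θ in 0..2 * π, h θ ^ 2) - 2 * ∫ θ in 0..2 * π, h θ * h (θ + δ) := by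
    have hexpand (θ : ℝ) :
        (h (θ + δ) - h θ) ^ 2 = h (θ + δ) ^ 2 + h θ ^ 2 - 2 * (h θ * h (θ + δ)) := by ring
    simp_rw [hexpand]
    rw [intervalIntegral.integral_sub (hint (by fun_prop)) (hint (by fun_prop)),
      intervalIntegral.integral_add (hint (by fun_prop)) (hint (by fun_prop)), hsq,
      intervalIntegral.integral_const_mul]
    ring
  have hexpand (θ : ℝ) : supportTriangleArea h δ θ =
      (h θ * h (θ + δ) + h θ * h (θ - δ) - 2 * Real.cos δ * h θ ^ 2) / (2 * Real.sin δ) := by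
    rw [supportTriangleArea]
    ring
  simp_rw [hexpand]
  rw [intervalIntegral.integral_div,
    intervalIntegral.integral_sub (hint (by fun_prop)) (hint (by fun_prop)),
    intervalIntegral.integral_add (hint (by fun_prop)) (hint (by fun_prop)), hprev,
    intervalIntegral.integral_const_mul, hdiff]
  ring

end Cover

section Area

variable {h : ℝ → ℝ} {K : Set ℝ²} {C : ℝ≥0}

theorem volume_mul_sinc_le (hcont : Continuous h) (hper : Function.Periodic h (2 * π))
    (hpos : ∀ θ, 0 < h θ) (hK : ∀ v ∈ K, ∀ θ, ⟪v, unitVec θ⟫ ≤ h θ)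
    (hside : ∀ δ θ, 2 * Real.cos δ * h θ ≤ h (θ + δ) + h (θ - δ)) {M : ℕ} (hM : 2 ≤ M) :
    (volume K).toReal * Real.sinc (π / M) ≤ 1 / 2 * (∫ θ in 0..2 * π, h θ ^ 2) -
      1 / 2 * ∫ θ in 0..2 * π, ((h (θ + π / M) - h θ) / (π / M)) ^ 2 := by
  have hMδ : (2 * M : ℕ) * (π / M) = 2 * π := by
    push_cast
    field_simp
  set δ := π / M
  have hδ : 0 < δ := by positivity
  have hsin : 0 < Real.sin δ :=
    Real.sin_pos_of_pos_of_lt_pi hδ (div_lt_self Real.pi_pos (by exact_mod_cast hM))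
  have hF : Continuous (supportTriangleArea h δ) := by
    unfold supportTriangleArea
    fun_prop
  have haverage : δ * (volume K).toReal ≤ ∫ θ in 0..2 * π, supportTriangleArea h δ θ :=
    calc δ * (volume K).toReal = ∫ _ in 0..δ, (volume K).toReal := by simp
      _ ≤ ∫ φ in 0..δ, ∑ k ∈ Finset.range (2 * M), supportTriangleArea h δ (φ + k * δ) :=
          intervalIntegral.integral_mono hδ.le (by simp)
            (Continuous.intervalIntegrable (by fun_prop) _ _)
            (volume_le_sum_supportTriangleArea hper hpos hK hM hside)
      _ = _ := by rw [integral_sum_add_mul_eq hF, hMδ]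
  rw [integral_supportTriangleArea hcont hper, le_div_iff₀ hsin] at haverage
  have hcos : (1 - Real.cos δ) * (∫ θ in 0..2 * π, h θ ^ 2) ≤
      δ ^ 2 / 2 * ∫ θ in 0..2 * π, h θ ^ 2 := by
    gcongr
    · exact intervalIntegral.integral_nonneg (by positivity) fun θ _ ↦ sq_nonneg _
    · linarith [Real.one_sub_sq_div_two_le_cos (x := δ)]
  rw [Real.sinc_of_ne_zero hδ.ne']
  simp_rw [div_pow _ δ]
  rw [intervalIntegral.integral_div, ← sub_nonneg]
  refine (div_nonneg (sub_nonneg.2 (haverage.trans (sub_le_sub_right hcos _)))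
    (sq_nonneg δ)).trans_eq ?_
  field_simp

theorem tendsto_integral_sq_slope (hf : LipschitzWith C h) (a b : ℝ) :
    Tendsto (fun δ ↦ ∫ θ in a..b, ((h (θ + δ) - h θ) / δ) ^ 2) (𝓝[≠] 0)
      (𝓝 (∫ θ in a..b, deriv h θ ^ 2)) := by
  have hcont := hf.continuous
  refine intervalIntegral.tendsto_integral_filter_of_dominated_convergence (fun _ ↦ (C : ℝ) ^ 2)
    (.of_forall fun δ ↦ (by fun_prop : Continuous fun θ ↦
      ((h (θ + δ) - h θ) / δ) ^ 2).aestronglyMeasurable) ?_ (by simp) ?_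
  · filter_upwards [self_mem_nhdsWithin] with δ hδ
    refine .of_forall fun θ _ ↦ ?_
    have hslope : |h (θ + δ) - h θ| ≤ C * |δ| := by
      simpa [Real.dist_eq] using hf.dist_le_mul (θ + δ) θ
    rw [Real.norm_of_nonneg (sq_nonneg _), ← sq_abs, abs_div]
    gcongr
    exact (div_le_iff₀ (abs_pos.2 hδ)).2 hslope
  · filter_upwards [hf.ae_differentiableAt_real] with θ hθ _
    refine Tendsto.pow ?_ 2
    simpa [div_eq_inv_mul] using hasDerivAt_iff_tendsto_slope_zero.1 hθ.hasDerivAt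

theorem volume_toReal_le_supportArea (hh : LipschitzWith C h) (hper : Function.Periodic h (2 * π))
    (hpos : ∀ θ, 0 < h θ) (hK : ∀ v ∈ K, ∀ θ, ⟪v, unitVec θ⟫ ≤ h θ)
    (hside : ∀ δ θ, 2 * Real.cos δ * h θ ≤ h (θ + δ) + h (θ - δ)) :
    (volume K).toReal ≤ supportArea h := by
  have hδ : Tendsto (fun n : ℕ ↦ π / n) atTop (𝓝[≠] 0) := by
    refine tendsto_nhdsWithin_iff.2 ⟨tendsto_const_div_atTop_nhds_zero_nat π, ?_⟩
    filter_upwards [eventually_ne_atTop 0] with n hn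
    simp [hn, Real.pi_ne_zero]
  have hsinc : Tendsto (fun n : ℕ ↦ (volume K).toReal * Real.sinc (π / n)) atTop
      (𝓝 (volume K).toReal) := by
    simpa [Function.comp_def] using ((Real.continuous_sinc.tendsto 0).comp
      (hδ.mono_right nhdsWithin_le_nhds)).const_mul (volume K).toReal
  have hslope := ((tendsto_integral_sq_slope hh 0 (2 * π)).comp hδ).const_mul (1 / 2) |>.const_sub
    (1 / 2 * ∫ θ in 0..2 * π, h θ ^ 2)
  have hsq : Continuous fun θ ↦ h θ ^ 2 := hh.continuous.pow 2
  rw [supportArea, intervalIntegral.integral_sub (hsq.intervalIntegrable _ _)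
    (intervalIntegrable_deriv_sq hh _ _), mul_sub]
  refine le_of_tendsto_of_tendsto hsinc hslope ?_
  filter_upwards [eventually_ge_atTop 2] with M hM
  exact volume_mul_sinc_le hh.continuous hper hpos hK hside hM

theorem exists_lipschitzWith_supportFun_unitVec (hK : IsCompact K) (hne : K.Nonempty) :
    ∃ C, LipschitzWith C fun θ ↦ supportFun K (unitVec θ) := by
  obtain ⟨C, hC⟩ := exists_lipschitzWith_supportFun hK hne
  exact ⟨C * 1, hC.comp lipschitzWith_unitVec⟩

theorem periodic_supportFun_unitVec (K : Set ℝ²) :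
    Function.Periodic (fun θ ↦ supportFun K (unitVec θ)) (2 * π) :=
  periodic_unitVec.comp (supportFun K)

theorem two_mul_cos_mul_supportFun_le (hK : IsCompact K) (hne : K.Nonempty) (δ θ : ℝ) :
    2 * Real.cos δ * supportFun K (unitVec θ) ≤
      supportFun K (unitVec (θ + δ)) + supportFun K (unitVec (θ - δ)) := by
  obtain ⟨x, hx, hxθ⟩ := exists_inner_eq_supportFun hK hne (unitVec θ)
  have hsum : ⟪x, unitVec (θ + δ)⟫ + ⟪x, unitVec (θ - δ)⟫ = 2 * Real.cos δ * ⟪x, unitVec θ⟫ := by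
    simp only [inner_unitVec, Real.cos_add, Real.cos_sub, Real.sin_add, Real.sin_sub]
    ring
  rw [← hxθ, ← hsum]
  exact add_le_add (inner_le_supportFun hK hx _) (inner_le_supportFun hK hx _)

theorem volume_toReal_le_supportArea_supportFun (hK : IsCompact K) (hint : (interior K).Nonempty) :
    (volume K).toReal ≤ supportArea fun θ ↦ supportFun K (unitVec θ) := by
  obtain ⟨c, hc⟩ := hint
  have hne : K.Nonempty := ⟨c, interior_subset hc⟩
  obtain ⟨C, hC⟩ := exists_lipschitzWith_supportFun_unitVec hK hne
  have hK₀ : IsCompact (-c +ᵥ K) := hK.vadd _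
  have hne₀ : (-c +ᵥ K).Nonempty := hne.vadd_set
  obtain ⟨C₀, hC₀⟩ := exists_lipschitzWith_supportFun_unitVec hK₀ hne₀
  have hpos (θ : ℝ) : 0 < supportFun (-c +ᵥ K) (unitVec θ) := by
    rw [supportFun_vadd hK hne, inner_neg_left]
    linarith [inner_lt_supportFun_of_mem_interior hK (unitVec_ne_zero θ) hc]
  calc (volume K).toReal = (volume (-c +ᵥ K)).toReal := by rw [measure_vadd]
    _ ≤ supportArea fun θ ↦ supportFun (-c +ᵥ K) (unitVec θ) :=
        volume_toReal_le_supportArea hC₀ (periodic_supportFun_unitVec _) hpos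
          (fun v hv θ ↦ inner_le_supportFun hK₀ hv _) (two_mul_cos_mul_supportFun_le hK₀ hne₀)
    _ = supportArea fun θ ↦ supportFun K (unitVec θ) - ⟪c, unitVec θ⟫ := by
        simp only [supportFun_vadd hK hne, inner_neg_left, neg_add_eq_sub]
    _ = _ := supportArea_sub_inner_unitVec hC (periodic_supportFun_unitVec K) c

end Area

section HausdorffLength

open Measure

variable {X : Type*} [MetricSpace X] [MeasurableSpace X] [BorelSpace X]

theorem edist_le_hausdorffMeasure_of_isPreconnected {s : Set X} (hs : IsPreconnected s) {x y : X}
    (hx : x ∈ s) (hy : y ∈ s) : edist x y ≤ μH[1] s := by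
  have hIcc : Icc 0 (dist x y) ⊆ dist x '' s :=
    (hs.image _ (by fun_prop)).Icc_subset ⟨x, hx, dist_self x⟩ ⟨y, hy, rfl⟩
  calc edist x y = volume (Icc 0 (dist x y)) := by rw [Real.volume_Icc, sub_zero, edist_dist]
    _ ≤ volume (dist x '' s) := measure_mono hIcc
    _ ≤ μH[1] s := by
      simpa [hausdorffMeasure_real] using
        (LipschitzWith.dist_right x).hausdorffMeasure_image_le zero_le_one s

theorem eVariationOn_Icc_le_hausdorffMeasure_image {γ : ℝ → X} {a b : ℝ}
    (hγ : ContinuousOn γ (Icc a b)) (hinj : InjOn γ (Ico a b)) :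
    eVariationOn γ (Icc a b) ≤ μH[1] (γ '' Icc a b) := by
  have := nullSingletonClass_hausdorff X one_pos
  refine iSup_le fun ⟨n, u, hu, hmem⟩ ↦ ?_
  have hsub (i : ℕ) : Ico (u i) (u (i + 1)) ⊆ Ico a b := fun t ht ↦
    ⟨(hmem i).1.trans ht.1, ht.2.trans_le (hmem (i + 1)).2⟩
  have hdisj : Pairwise (Function.onFun Disjoint fun i ↦ γ '' Ico (u i) (u (i + 1))) :=
    fun i j hij ↦ (hu.pairwise_disjoint_on_Ico_succ hij).image hinj (hsub i) (hsub j)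
  have hmeas (i : ℕ) : MeasurableSet (γ '' Ico (u i) (u (i + 1))) :=
    measurableSet_Ico.image_of_continuousOn_injOn
      (hγ.mono ((hsub i).trans Ico_subset_Icc_self)) (hinj.mono (hsub i))
  have hpiece (i : ℕ) :
      edist (γ (u (i + 1))) (γ (u i)) ≤ μH[1] (γ '' Ico (u i) (u (i + 1))) := by
    have hle := hu i.le_succ
    calc edist (γ (u (i + 1))) (γ (u i)) ≤ μH[1] (γ '' Icc (u i) (u (i + 1))) :=
          edist_le_hausdorffMeasure_of_isPreconnected
            (isPreconnected_Icc.image γ (hγ.mono (Icc_subset_Icc (hmem i).1 (hmem (i + 1)).2)))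
            (mem_image_of_mem γ (right_mem_Icc.2 hle)) (mem_image_of_mem γ (left_mem_Icc.2 hle))
      _ = μH[1] (insert (γ (u (i + 1))) (γ '' Ico (u i) (u (i + 1)))) := by
          rw [← Ico_insert_right hle, image_insert_eq]
      _ = _ := measure_congr (insert_ae_eq_self _ _)
  calc ∑ i ∈ Finset.range n, edist (γ (u (i + 1))) (γ (u i))
      ≤ ∑ i ∈ Finset.range n, μH[1] (γ '' Ico (u i) (u (i + 1))) :=
        Finset.sum_le_sum fun i _ ↦ hpiece i
    _ = μH[1] (⋃ i ∈ Finset.range n, γ '' Ico (u i) (u (i + 1))) :=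
        (measure_biUnion_finset (hdisj.set_pairwise _) fun i _ ↦ hmeas i).symm
    _ ≤ μH[1] (γ '' Icc a b) :=
        measure_mono (iUnion₂_subset fun i _ ↦ image_mono ((hsub i).trans Ico_subset_Icc_self))

end HausdorffLength

section ConvexFrontier

open Measure

variable {E : Type*} [NormedAddCommGroup E] [InnerProductSpace ℝ E] {K : Set E} {M : ℝ}

theorem exists_supporting_normal_of_mem_frontier [CompleteSpace E] (hconv : Convex ℝ K)
    (hint : (interior K).Nonempty) {x : E} (hx : x ∈ frontier K) :
    ∃ u ≠ 0, ∀ y ∈ closure K, ⟪y, u⟫ ≤ ⟪x, u⟫ := by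
  obtain ⟨f, hf, hle⟩ := geometric_hahn_banach_of_nonempty_interior_point hconv hx.2 hint
  refine ⟨(InnerProductSpace.toDual ℝ E).symm f, by simpa using hf, fun y hy ↦ ?_⟩
  rw [real_inner_comm, real_inner_comm _ x, InnerProductSpace.toDual_symm_apply,
    InnerProductSpace.toDual_symm_apply]
  exact closure_minimal hle (isClosed_le f.continuous continuous_const) hy

theorem dist_le_dist_add_smul {x y u v : E} {s t : ℝ} (hs : 0 ≤ s) (ht : 0 ≤ t)
    (hu : ⟪y, u⟫ ≤ ⟪x, u⟫) (hv : ⟪x, v⟫ ≤ ⟪y, v⟫) : dist x y ≤ dist (x + s • u) (y + t • v) := by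
  rw [dist_eq_norm, dist_eq_norm]
  have hinner : ‖x - y‖ ^ 2 ≤ ⟪x - y, x + s • u - (y + t • v)⟫ := by
    rw [add_sub_add_comm, inner_add_right, real_inner_self_eq_norm_sq, inner_sub_right,
      real_inner_smul_right, real_inner_smul_right, inner_sub_left, inner_sub_left]
    linarith [mul_nonneg hs (sub_nonneg.2 hu), mul_nonneg ht (sub_nonneg.2 hv)]
  have hcs := hinner.trans (real_inner_le_norm _ _)
  by_contra! hlt
  nlinarith [norm_nonneg (x + s • u - (y + t • v))]

theorem exists_nonneg_norm_add_smul_eq {x u : E} (hu : u ≠ 0) (hx : ‖x‖ ≤ M) :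
    ∃ t : ℝ, 0 ≤ t ∧ ‖x + t • u‖ = M := by
  have hM : 0 ≤ M := (norm_nonneg x).trans hx
  have hu' : 0 < ‖u‖ := norm_pos_iff.2 hu
  have hfar : M ≤ ‖x + (2 * M / ‖u‖) • u‖ := by
    have hnorm : ‖(2 * M / ‖u‖) • u‖ = 2 * M := by
      rw [norm_smul, Real.norm_of_nonneg (by positivity), div_mul_cancel₀ _ hu'.ne']
    rw [add_comm]
    linarith [norm_sub_le_norm_add ((2 * M / ‖u‖) • u) x]
  obtain ⟨t, ht, hnorm⟩ := intermediate_value_Icc (a := 0) (b := 2 * M / ‖u‖) (by positivity)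
    (f := fun t ↦ ‖x + t • u‖) (by fun_prop) ⟨by simpa using hx, hfar⟩
  exact ⟨t, ht.1, hnorm⟩

theorem hausdorffMeasure_frontier_le_sphere [CompleteSpace E] [MeasurableSpace E] [BorelSpace E]
    (hconv : Convex ℝ K) (hint : (interior K).Nonempty) (hM : K ⊆ closedBall 0 M) {d : ℝ}
    (hd : 0 ≤ d) : μH[d] (frontier K) ≤ μH[d] (sphere (0 : E) M) := by
  choose u hu_ne hu using fun x : frontier K ↦
    exists_supporting_normal_of_mem_frontier hconv hint x.2
  have hnorm (x : frontier K) : ‖(x : E)‖ ≤ M :=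
    mem_closedBall_zero_iff.1 (closure_minimal hM isClosed_closedBall x.2.1)
  choose t ht hsphere using fun x : frontier K ↦
    exists_nonneg_norm_add_smul_eq (hu_ne x) (hnorm x)
  have hanti : AntilipschitzWith 1 fun x : frontier K ↦ (x : E) + t x • u x :=
    AntilipschitzWith.of_le_mul_dist fun x y ↦ by
      simpa [Subtype.dist_eq] using
        dist_le_dist_add_smul (ht x) (ht y) (hu x y y.2.1) (hu y x x.2.1)
  calc μH[d] (frontier K) = μH[d] (univ : Set (frontier K)) := by
        rw [← isometry_subtype_coe.hausdorffMeasure_image (s := univ) (.inl hd), image_univ,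
          Subtype.range_coe]
    _ ≤ μH[d] (range fun x : frontier K ↦ (x : E) + t x • u x) := by
        simpa using hanti.le_hausdorffMeasure_image hd univ
    _ ≤ μH[d] (sphere (0 : E) M) :=
        measure_mono (range_subset_iff.2 fun x ↦ by simpa using hsphere x)

theorem hausdorffMeasure_sphere_lt_top (M : ℝ) : μH[1] (sphere (0 : ℝ²) M) < ∞ := by
  have hlip : LipschitzWith ‖M‖₊ fun θ ↦ M • unitVec θ := by
    simpa [Function.comp_def] using (lipschitzWith_smul M).comp lipschitzWith_unitVec
  have hsub : sphere (0 : ℝ²) M ⊆ (fun θ ↦ M • unitVec θ) '' Icc 0 (2 * π) := fun v hv ↦ by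
    obtain ⟨α, hα⟩ := exists_eq_norm_smul_unitVec v
    obtain ⟨θ, hθ, hθα⟩ := periodic_unitVec.exists_mem_Ico₀ Real.two_pi_pos α
    refine ⟨θ, Ico_subset_Icc_self hθ, ?_⟩
    rw [mem_sphere_zero_iff_norm] at hv
    simp only [← hθα, ← hv, ← hα]
  refine (measure_mono hsub).trans_lt ((hlip.hausdorffMeasure_image_le zero_le_one _).trans_lt ?_)
  rw [ENNReal.rpow_one, hausdorffMeasure_real]
  exact ENNReal.mul_lt_top ENNReal.coe_lt_top measure_Icc_lt_top

theorem hausdorffMeasure_frontier_lt_top {K : Set ℝ²} (hK : Bornology.IsBounded K)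
    (hconv : Convex ℝ K) (hint : (interior K).Nonempty) : μH[1] (frontier K) < ∞ := by
  obtain ⟨M, hM⟩ := hK.subset_closedBall 0
  exact (hausdorffMeasure_frontier_le_sphere hconv hint hM zero_le_one).trans_lt
    (hausdorffMeasure_sphere_lt_top M)

end ConvexFrontier

section Length

theorem two_mul_dist_le_sum_dist {X : Type*} [PseudoMetricSpace X] {p : ℕ → X} {n i j : ℕ}
    (hp : p 0 = p n) (hi : i ≤ n) (hj : j ≤ n) :
    2 * dist (p i) (p j) ≤ ∑ k ∈ Finset.range n, dist (p k) (p (k + 1)) := by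
  wlog hij : i ≤ j generalizing i j
  · rw [dist_comm]
    exact this hj hi (le_of_not_ge hij)
  rw [Finset.range_eq_Ico, ← Finset.sum_Ico_consecutive _ i.zero_le hi,
    ← Finset.sum_Ico_consecutive _ hij hj]
  have hleft := dist_le_Ico_sum_dist p i.zero_le
  have hmid := dist_le_Ico_sum_dist p hij
  have hright := dist_le_Ico_sum_dist p hj
  rw [← hp] at hright
  linarith [dist_triangle_left (p i) (p j) (p 0), dist_comm (p j) (p 0)]

theorem integral_abs_cos : ∫ θ in 0..2 * π, |Real.cos θ| = 4 := by
  have hper : Function.Periodic (fun θ ↦ |Real.cos θ|) π := fun θ ↦ by simp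
  have hhalf : ∫ θ in -(π / 2)..π / 2, |Real.cos θ| = 2 := by
    rw [intervalIntegral.integral_congr (g := Real.cos) fun θ hθ ↦ ?_]
    · norm_num
    · rw [uIcc_of_le (by linarith [Real.pi_pos])] at hθ
      exact abs_of_nonneg (Real.cos_nonneg_of_mem_Icc hθ)
  calc ∫ θ in 0..2 * π, |Real.cos θ|
      = (2 : ℤ) • ∫ θ in 0..0 + π, |Real.cos θ| := by
        simpa using hper.intervalIntegral_add_zsmul_eq 2 0 fun a b ↦
          Continuous.intervalIntegrable (by fun_prop) a b
    _ = (2 : ℤ) • ∫ θ in -(π / 2)..π / 2, |Real.cos θ| := by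
        rw [hper.intervalIntegral_add_eq 0 (-(π / 2))]
        ring_nf
    _ = 4 := by rw [hhalf]; norm_num

theorem integral_abs_inner_unitVec (v : ℝ²) : ∫ θ in 0..2 * π, |⟪v, unitVec θ⟫| = 4 * ‖v‖ := by
  obtain ⟨α, hα⟩ := exists_eq_norm_smul_unitVec v
  have hinner (θ : ℝ) : |⟪v, unitVec θ⟫| = ‖v‖ * |Real.cos (θ - α)| := by
    rw [hα, real_inner_smul_left, inner_unitVec_unitVec, abs_mul, ← hα, abs_norm, ← Real.cos_neg,
      neg_sub]
  have hper : Function.Periodic (fun θ ↦ |Real.cos θ|) (2 * π) := fun θ ↦ by simp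
  simp_rw [hinner, sub_eq_add_neg]
  rw [intervalIntegral.integral_const_mul, integral_comp_add_of_periodic hper, integral_abs_cos,
    mul_comm]

theorem integral_supportFun_le_sum_dist {p : ℕ → ℝ²} {n : ℕ} (hp : p 0 = p n) :
    ∫ θ in 0..2 * π, supportFun (p '' Iic n) (unitVec θ) ≤
      ∑ k ∈ Finset.range n, dist (p k) (p (k + 1)) := by
  have hP : IsCompact (p '' Iic n) := ((finite_Iic n).image p).isCompact
  have hne : (p '' Iic n).Nonempty := nonempty_Iic.image p
  set h : ℝ → ℝ := fun θ ↦ supportFun (p '' Iic n) (unitVec θ)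
  have hcont : Continuous h := by
    obtain ⟨C, hC⟩ := exists_lipschitzWith_supportFun_unitVec hP hne
    exact hC.continuous
  have hwidth (θ : ℝ) : 2 * (h θ + h (θ + π)) ≤
      ∑ k ∈ Finset.range n, |⟪p k - p (k + 1), unitVec θ⟫| := by
    obtain ⟨_, ⟨i, hi, rfl⟩, hiθ⟩ := exists_inner_eq_supportFun hP hne (unitVec θ)
    obtain ⟨_, ⟨j, hj, rfl⟩, hjθ⟩ := exists_inner_eq_supportFun hP hne (-unitVec θ)
    have htour := two_mul_dist_le_sum_dist (p := fun k ↦ ⟪p k, unitVec θ⟫) (by rw [hp]) hi hj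
    simp only [Real.dist_eq, ← inner_sub_left] at htour
    refine le_trans ?_ htour
    simp only [h, unitVec_add_pi, ← hiθ, ← hjθ, inner_neg_right, ← sub_eq_add_neg,
      ← inner_sub_left]
    gcongr
    exact le_abs_self _
  have habs (k : ℕ) : Continuous fun θ ↦ |⟪p k - p (k + 1), unitVec θ⟫| :=
    (lipschitzWith_inner_unitVec _).continuous.abs
  have hint := intervalIntegral.integral_mono (μ := volume) Real.two_pi_pos.le
    (Continuous.intervalIntegrable (by fun_prop) _ _)
    (Continuous.intervalIntegrable (by fun_prop) _ _) hwidth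
  rw [intervalIntegral.integral_const_mul,
    intervalIntegral.integral_add (hcont.intervalIntegrable _ _)
      (Continuous.intervalIntegrable (by fun_prop) _ _),
    integral_comp_add_of_periodic (periodic_supportFun_unitVec _),
    intervalIntegral.integral_finsetSum fun k _ ↦ (habs k).intervalIntegrable _ _] at hint
  simp_rw [integral_abs_inner_unitVec, ← dist_eq_norm, ← Finset.mul_sum] at hint
  linarith

theorem exists_monotone_forall_dist_le {X : Type*} [PseudoMetricSpace X] {γ : ℝ → X} {a b ε : ℝ}
    (hab : a ≤ b) (hγ : ContinuousOn γ (Icc a b)) (hε : 0 < ε) :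
    ∃ (t : ℕ → ℝ) (n : ℕ), Monotone t ∧ (∀ k, t k ∈ Icc a b) ∧ t 0 = a ∧ t n = b ∧
      ∀ s ∈ Icc a b, ∃ k ≤ n, dist (γ s) (γ (t k)) ≤ ε := by
  have hcover : univ ⊆ ⋃ s : Icc a b, (Icc a b).domRestrict γ ⁻¹' ball (γ s) (ε / 2) :=
    fun s _ ↦ mem_iUnion.2 ⟨s, mem_ball_self (half_pos hε)⟩
  obtain ⟨t, ht₀, ht, ⟨n, hn⟩, hsub⟩ := exists_monotone_Icc_subset_open_cover_Icc hab
    (fun s ↦ isOpen_ball.preimage hγ.domRestrict) hcover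
  refine ⟨fun k ↦ t k, n, ht, fun k ↦ (t k).2, ht₀, hn n le_rfl, fun s hs ↦ ?_⟩
  rcases hs.1.eq_or_lt with rfl | has
  · exact ⟨0, n.zero_le, by simp [ht₀, hε.le]⟩
  have hsn : (⟨s, hs⟩ : Icc a b) ∈ Ioc (t 0) (t n) := by
    rw [mem_Ioc, ← Subtype.coe_lt_coe, ← Subtype.coe_le_coe, ht₀, hn n le_rfl]
    exact ⟨has, hs.2⟩
  rw [← ht.biUnion_Ico_Ioc_map_succ 0 n] at hsn
  simp only [mem_iUnion, mem_Ico] at hsn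
  obtain ⟨k, ⟨-, hk⟩, hks⟩ := hsn
  obtain ⟨c, hc⟩ := hsub k
  have hs_near : dist (γ s) (γ c) < ε / 2 := hc (Ioc_subset_Icc_self hks)
  have ht_near : dist (γ (t k)) (γ c) < ε / 2 := hc (left_mem_Icc.2 (ht k.le_succ))
  exact ⟨k, hk.le, by linarith [dist_triangle_right (γ s) (γ (t k)) (γ c)]⟩

theorem integral_supportFun_image_le_eVariationOn {γ : ℝ → ℝ²} {a b : ℝ} (hab : a ≤ b)
    (hγ : ContinuousOn γ (Icc a b)) (hclosed : γ a = γ b) (hfin : eVariationOn γ (Icc a b) ≠ ∞) :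
    ∫ θ in 0..2 * π, supportFun (γ '' Icc a b) (unitVec θ) ≤
      (eVariationOn γ (Icc a b)).toReal := by
  refine le_of_forall_pos_le_add fun ε hε ↦ ?_
  obtain ⟨t, n, ht, htmem, ht₀, htn, hnet⟩ :=
    exists_monotone_forall_dist_le hab hγ (ε := ε / (2 * π)) (by positivity)
  have hΓ : IsCompact (γ '' Icc a b) := isCompact_Icc.image_of_continuousOn hγ
  have hΓne : (γ '' Icc a b).Nonempty := (nonempty_Icc.2 hab).image γ
  have hP : IsCompact ((γ ∘ t) '' Iic n) := ((finite_Iic n).image _).isCompact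
  have hPne : ((γ ∘ t) '' Iic n).Nonempty := nonempty_Iic.image _
  have hint {Q : Set ℝ²} (hQ : IsCompact Q) (hQne : Q.Nonempty) :
      IntervalIntegrable (fun θ ↦ supportFun Q (unitVec θ)) volume 0 (2 * π) := by
    obtain ⟨C, hC⟩ := exists_lipschitzWith_supportFun_unitVec hQ hQne
    exact hC.continuous.intervalIntegrable _ _
  have hnear : ∀ x ∈ γ '' Icc a b, ∃ y ∈ (γ ∘ t) '' Iic n, dist x y ≤ ε / (2 * π) := by
    rintro _ ⟨s, hs, rfl⟩
    obtain ⟨k, hk, hdist⟩ := hnet s hs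
    exact ⟨_, mem_image_of_mem _ hk, hdist⟩
  have hvar : ∑ k ∈ Finset.range n, dist (γ (t k)) (γ (t (k + 1))) ≤
      (eVariationOn γ (Icc a b)).toReal := by
    have := ENNReal.toReal_mono hfin (eVariationOn.sum_le (n := n) ht htmem)
    rw [ENNReal.toReal_sum fun k _ ↦ edist_ne_top _ _] at this
    simpa [← dist_edist, dist_comm] using this
  calc ∫ θ in 0..2 * π, supportFun (γ '' Icc a b) (unitVec θ)
      ≤ ∫ θ in 0..2 * π, (supportFun ((γ ∘ t) '' Iic n) (unitVec θ) + ε / (2 * π)) :=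
        intervalIntegral.integral_mono Real.two_pi_pos.le (hint hΓ hΓne)
          ((hint hP hPne).add (by simp))
          fun θ ↦ supportFun_le_add_of_forall_dist_le hΓne hP (norm_unitVec θ) hnear
    _ = (∫ θ in 0..2 * π, supportFun ((γ ∘ t) '' Iic n) (unitVec θ)) + ε := by
        rw [intervalIntegral.integral_add (hint hP hPne) (by simp),
          intervalIntegral.integral_const, sub_zero, smul_eq_mul,
          mul_div_cancel₀ _ Real.two_pi_pos.ne']
    _ ≤ _ := by
        gcongr
        exact (integral_supportFun_le_sum_dist (by simp [ht₀, htn, hclosed])).trans hvar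

end Length

section Bonnesen

variable {K : Set ℝ²}

theorem integral_inner_unitVec (c : ℝ²) : ∫ θ in 0..2 * π, ⟪c, unitVec θ⟫ = 0 := by
  simp only [inner_unitVec]
  rw [intervalIntegral.integral_add (Continuous.intervalIntegrable (by fun_prop) _ _)
    (Continuous.intervalIntegrable (by fun_prop) _ _)]
  simp

theorem volume_toReal_le_of_forall_exists_contact (hK : IsCompact K)
    (hint : (interior K).Nonempty) {c : ℝ²} {ρ : ℝ}
    (hcontact : ∀ v, ∃ u, ‖u‖ = 1 ∧ 0 ≤ ⟪v, u⟫ ∧ supportFun K u - ⟪c, u⟫ = ρ) :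
    (volume K).toReal ≤ ρ * (∫ θ in 0..2 * π, supportFun K (unitVec θ)) - π * ρ ^ 2 := by
  obtain ⟨C, hC⟩ :=
    exists_lipschitzWith_supportFun_unitVec hK (hint.mono interior_subset)
  have hc := lipschitzWith_inner_unitVec c
  have hper := periodic_supportFun_unitVec K
  have harc (α : ℝ) :
      ∃ θ ∈ Icc α (α + π), supportFun K (unitVec θ) - ⟪c, unitVec θ⟫ = ρ := by
    obtain ⟨u, hu, hαu, hρ⟩ := hcontact (unitVec (α + π / 2))
    obtain ⟨θ, hθ, rfl⟩ := exists_unitVec_eq_of_inner_nonneg hu hαu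
    exact ⟨θ, hθ, hρ⟩
  calc (volume K).toReal ≤ supportArea fun θ ↦ supportFun K (unitVec θ) :=
        volume_toReal_le_supportArea_supportFun hK hint
    _ = supportArea fun θ ↦ supportFun K (unitVec θ) - ⟪c, unitVec θ⟫ :=
        (supportArea_sub_inner_unitVec hC hper c).symm
    _ ≤ ρ * (∫ θ in 0..2 * π, (supportFun K (unitVec θ) - ⟪c, unitVec θ⟫)) - π * ρ ^ 2 :=
        supportArea_le_of_forall_exists_eq (hC.sub hc) (hper.sub (periodic_inner_unitVec c)) harc
    _ = _ := by
        rw [intervalIntegral.integral_sub (hC.continuous.intervalIntegrable _ _)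
          (hc.continuous.intervalIntegrable _ _), integral_inner_unitVec, sub_zero]

theorem volume_toReal_le_inradius (hK : IsCompact K) (hconv : Convex ℝ K)
    (hint : (interior K).Nonempty) :
    (volume K).toReal ≤
      inradius K * (∫ θ in 0..2 * π, supportFun K (unitVec θ)) - π * inradius K ^ 2 := by
  have hne := hint.mono interior_subset
  obtain ⟨-, c, hc⟩ := (isGreatest_inradius hK hconv hne).1
  exact volume_toReal_le_of_forall_exists_contact hK hint (exists_contact_inradius hK hconv hne hc)

theorem volume_toReal_le_circumradius (hK : IsCompact K) (hint : (interior K).Nonempty) :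
    (volume K).toReal ≤
      circumradius K * (∫ θ in 0..2 * π, supportFun K (unitVec θ)) - π * circumradius K ^ 2 := by
  have hne := hint.mono interior_subset
  obtain ⟨-, c, hc⟩ := (isLeast_circumradius hK hne).1
  exact volume_toReal_le_of_forall_exists_contact hK hint (exists_contact_circumradius hK hne hc)

theorem inradius_nonneg (K : Set ℝ²) : 0 ≤ inradius K := Real.sSup_nonneg fun _ hρ ↦ hρ.1

theorem circumradius_nonneg (K : Set ℝ²) : 0 ≤ circumradius K := Real.sInf_nonneg fun _ hρ ↦ hρ.1

theorem integral_supportFun_le_eVariationOn_frontier (hK : IsCompact K) (hconv : Convex ℝ K)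
    (hint : (interior K).Nonempty) {γ : ℝ → ℝ²} {a b : ℝ} (hab : a ≤ b)
    (hγ : ContinuousOn γ (Icc a b)) (hclosed : γ a = γ b) (hinj : InjOn γ (Ico a b))
    (hfrontier : γ '' Icc a b = frontier K) :
    ∫ θ in 0..2 * π, supportFun K (unitVec θ) ≤ (eVariationOn γ (Icc a b)).toReal := by
  have hfin : eVariationOn γ (Icc a b) < ∞ :=
    (eVariationOn_Icc_le_hausdorffMeasure_image hγ hinj).trans_lt
      (hfrontier ▸ hausdorffMeasure_frontier_lt_top hK.isBounded hconv hint)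
  have hle := integral_supportFun_image_le_eVariationOn hab hγ hclosed hfin.ne
  simpa only [hfrontier, supportFun_frontier hK (hint.mono interior_subset) (unitVec_ne_zero _)]
    using hle

theorem sq_two_pi_mul_sub_le {A L P ρ : ℝ} (hA : A ≤ ρ * P - π * ρ ^ 2) (hP : P ≤ L)
    (hρ : 0 ≤ ρ) : (2 * π * ρ - L) ^ 2 ≤ L ^ 2 - 4 * π * A := by
  have hAL : A ≤ ρ * L - π * ρ ^ 2 := hA.trans (by gcongr)
  linear_combination 4 * π * hAL

end Bonnesen

/-- **Bonnesen's inequality.**  Let `K ⊆ ℝ²` be a compact convex set with nonempty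
interior, of area `A`, boundary length `L`, circumradius `R` and inradius `r`; the
boundary length is the total variation of a continuous closed parametrization of the
topological boundary of `K`, injective on `[0,1)`.  Then `L² − 4πA ≥ π²(R − r)²`. -/
theorem bonnesen_inequality (K : Set (EuclideanSpace ℝ (Fin 2)))
    (hcomp : IsCompact K) (hconv : Convex ℝ K) (hint : (interior K).Nonempty)
    (γ : ℝ → EuclideanSpace ℝ (Fin 2))
    (hγcont : ContinuousOn γ (Set.Icc 0 1))
    (hγclosed : γ 0 = γ 1)
    (hγinj : Set.InjOn γ (Set.Ico 0 1))
    (hγimg : γ '' Set.Icc 0 1 = frontier K)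
    (L : ℝ) (hL : L = (eVariationOn γ (Set.Icc 0 1)).toReal) :
    Real.pi ^ 2 * (circumradius K - inradius K) ^ 2 ≤
      L ^ 2 - 4 * Real.pi * (volume K).toReal := by
  have hlength : ∫ θ in 0..2 * π, supportFun K (unitVec θ) ≤ L :=
    hL ▸ integral_supportFun_le_eVariationOn_frontier hcomp hconv hint zero_le_one hγcont
      hγclosed hγinj hγimg
  have hinradius : (2 * π * inradius K - L) ^ 2 ≤ L ^ 2 - 4 * π * (volume K).toReal :=
    sq_two_pi_mul_sub_le (volume_toReal_le_inradius hcomp hconv hint) hlength (inradius_nonneg K)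
  have hcircumradius : (2 * π * circumradius K - L) ^ 2 ≤ L ^ 2 - 4 * π * (volume K).toReal :=
    sq_two_pi_mul_sub_le (volume_toReal_le_circumradius hcomp hint) hlength
      (circumradius_nonneg K)
  nlinarith [sq_nonneg ((2 * π * circumradius K - L) + (2 * π * inradius K - L))]
end
end
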